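/- For every probability measure μ on 𝕋^d there exists a sequence of probability measures μ_n on Ξ_n converging weakly to μ such that limsup_{n→∞} n·ℐ_n(μ_n) ≤ J⁰(μ). -/

import Mathlib

/-!
For a critical point `z` with Hessian `H`, take `S(w) = w ⬝ |H| w / 2` and let `ν_n` be the
normalized restriction of `e^{-n S(x - z)}` to the lattice points at distance at most `n^{-2/5}`
from `z`. This is the ground state of the harmonic approximation of the generator at `z`.

Expanding the square in `ℐ_n` removes the partition function (`IT_eq`):
`ℐ_n(μ) = ∑_x ∑_{y ∼ x} (μ(x) e^{-n(F(y) - F(x))/2} - √(μ(x) μ(y)))`.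
For `μ = ν_n ∝ u²` with `u = e^{-nS/2}` one has `u(x) u(y) = u(x)² e^{-n(S(y) - S(x))/2}`, so
`n ℐ_n(ν_n)` is the `ν_n`-average of
`n ∑_{y ∼ x} (e^{-n(F(y) - F(x))/2} - e^{-n(S(y) - S(x))/2})`, up to an error carried by the edges
that leave the support of the cutoff (`energy_le`). A second-order expansion (`bracket_le`) bounds
this bracket by `n (|H w|² - ||H| w|²) / 4 + (tr |H| - tr H) / 2 + o(1)`, where `w = x - z`. The
quadratic terms cancel because `|H|² = H²`, and `(tr |H| - tr H) / 2` is the sum of the negative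
parts of the eigenvalues, that is `ζ(z)` (`exists_absMat`). The exponent `2/5` lies strictly between
`1/3`, needed to control the cubic errors `n r³`, and `1/2`, needed to make the boundary error
`n^{d+1} e^{-c n r²}` vanish. This gives a recovery sequence for every Dirac mass at a critical point
(`exists_well`).

If `J⁰(μ) < ∞`, then `μ` is a finite mixture of such Dirac masses; mixing their recovery sequences
with the same weights suffices, since `ℐ_n` is convex (`IT_convex`). If `J⁰(μ) = ∞`, any weak
approximation of `μ` by lattice measures will do (`exists_weak`).
-/

open Filter MeasureTheory
open scoped ENNReal Classical

noncomputable section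

/-- Discretization of the torus `𝕋^d = ℝ^d/ℤ^d`: the points `k/n`, `k ∈ {0,…,n-1}^d`,
taken as representatives in the fundamental domain `[0,1)^d`. -/
def XiT (d n : ℕ) : Finset (Fin d → ℝ) :=
  (Finset.univ : Finset (Fin d → Fin n)).image fun k i => (k i : ℝ) / n

/-- `x` and `y` are nearest neighbours of the discretized torus: `y - x ≡ ±eᵢ/n mod ℤ^d`. -/
def NbrT (d n : ℕ) (x y : Fin d → ℝ) : Prop :=
  ∃ i : Fin d, ∃ s : ℝ, (s = 1 ∨ s = -1) ∧ ∃ v : Fin d → ℤ,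
    ∀ j, y j = x j + (if j = i then s / n else 0) + (v j : ℝ)

/-- Partition function `Z_{F,n}`. -/
def ZT (d : ℕ) (F : (Fin d → ℝ) → ℝ) (n : ℕ) : ℝ :=
  ∑ x ∈ XiT d n, Real.exp (-(n : ℝ) * F x)

/-- Stationary measure `π_n(x) = e^{-nF(x)}/Z_{F,n}`. -/
def piT (d : ℕ) (F : (Fin d → ℝ) → ℝ) (n : ℕ) (x : Fin d → ℝ) : ℝ :=
  Real.exp (-(n : ℝ) * F x) / ZT d F n

/-- Jump rates `R_n(x,y) = e^{-(n/2)(F(y)-F(x))}` for nearest neighbours, `0` otherwise. -/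
def RT (d : ℕ) (F : (Fin d → ℝ) → ℝ) (n : ℕ) (x y : Fin d → ℝ) : ℝ :=
  if NbrT d n x y then Real.exp (-((n : ℝ) / 2) * (F y - F x)) else 0

/-- Level-two large deviations rate functional `ℐ_n`. -/
def IT (d : ℕ) (F : (Fin d → ℝ) → ℝ) (n : ℕ) (μ : (Fin d → ℝ) → ℝ) : ℝ :=
  (1 / 2) * ∑ x ∈ XiT d n, ∑ y ∈ (XiT d n).erase x,
    piT d F n x * RT d F n x y *
      (Real.sqrt (μ y / piT d F n y) - Real.sqrt (μ x / piT d F n x)) ^ 2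

/-- The function `G(x) = Σᵢ 2(cosh(∂ᵢF(x)/2) - 1)`. -/
def GT (d : ℕ) (F : (Fin d → ℝ) → ℝ) (x : Fin d → ℝ) : ℝ :=
  ∑ i : Fin d, 2 * (Real.cosh (fderiv ℝ F x (Pi.single i 1) / 2) - 1)

/-- A function on `ℝ^d` is `ℤ^d`-periodic, i.e. well defined on the torus. -/
def PerT (d : ℕ) (g : (Fin d → ℝ) → ℝ) : Prop :=
  ∀ (x : Fin d → ℝ) (v : Fin d → ℤ), g (fun i => x i + (v i : ℝ)) = g x

/-- The (Euclidean) torus distance. -/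
def tdistT (d : ℕ) (x y : Fin d → ℝ) : ℝ :=
  ⨅ v : Fin d → ℤ, Real.sqrt (∑ i, (x i - y i - (v i : ℝ)) ^ 2)

/-- Membership in the (torus) cube of side `ε` centered at `z`. -/
def InCubeT (d : ℕ) (ε : ℝ) (z x : Fin d → ℝ) : Prop :=
  ∃ v : Fin d → ℤ, ∀ i, |x i - z i - (v i : ℝ)| ≤ ε / 2

/-- The discretized cube `Q^n_ε(z) = Q_ε(z) ∩ Ξ_n`. -/
def QT (d : ℕ) (ε : ℝ) (z : Fin d → ℝ) (n : ℕ) : Finset (Fin d → ℝ) :=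
  (XiT d n).filter (InCubeT d ε z)

/-- The Hessian matrix of `F` at `x`. -/
def HessT (d : ℕ) (F : (Fin d → ℝ) → ℝ) (x : Fin d → ℝ) : Matrix (Fin d) (Fin d) ℝ :=
  Matrix.of fun i j => fderiv ℝ (fun y => fderiv ℝ F y (Pi.single j 1)) x (Pi.single i 1)

/-! ### Nearest neighbours and the expanded rate functional -/

/-- The displacement `± eᵢ/n` encoded by `p = (i, ±)`. -/
def stp (d n : ℕ) (p : Fin d × Bool) : Fin d → ℝ :=
  Pi.single p.1 ((if p.2 then 1 else -1) / (n : ℝ))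

/-- The neighbour `x ± eᵢ/n` of `x`, reduced to the fundamental domain `[0,1)^d`. -/
def nb (d n : ℕ) (x : Fin d → ℝ) (p : Fin d × Bool) : Fin d → ℝ :=
  fun j => Int.fract (x j + stp d n p j)

lemma mem_XiT {d n : ℕ} (hn : 0 < n) (x : Fin d → ℝ) :
    x ∈ XiT d n ↔ ∀ j, (∃ m : ℤ, x j = m / n) ∧ 0 ≤ x j ∧ x j < 1 := by
  have hn' : (0 : ℝ) < n := by exact_mod_cast hn
  constructor
  · intro h
    obtain ⟨k, -, rfl⟩ := Finset.mem_image.1 h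
    intro j
    refine ⟨⟨(k j : ℕ), by simp⟩, by positivity, ?_⟩
    rw [div_lt_one hn']
    exact_mod_cast (k j).2
  · intro h
    choose hm h0 h1 using h
    choose m hm using hm
    have hm0 : ∀ j, 0 ≤ m j := fun j => by
      have := h0 j
      rw [hm j, le_div_iff₀ hn'] at this
      have h2 : (0 : ℝ) ≤ m j := by linarith
      exact_mod_cast h2
    have hm1 : ∀ j, m j < n := fun j => by
      have := h1 j
      rw [hm j, div_lt_one hn'] at this
      exact_mod_cast this
    refine Finset.mem_image.2 ⟨fun j => ⟨(m j).toNat, by have := hm0 j; have := hm1 j; omega⟩,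
      Finset.mem_univ _, ?_⟩
    funext j
    rw [hm j]
    congr 1
    have : ((m j).toNat : ℤ) = m j := Int.toNat_of_nonneg (hm0 j)
    exact_mod_cast congrArg (Int.cast : ℤ → ℝ) this

lemma nb_mem {d n : ℕ} (hn : 0 < n) {x : Fin d → ℝ} (hx : x ∈ XiT d n) (p : Fin d × Bool) :
    nb d n x p ∈ XiT d n := by
  have hn' : (0 : ℝ) < n := by exact_mod_cast hn
  rw [mem_XiT hn] at hx ⊢
  intro j
  obtain ⟨⟨m, hm⟩, -, -⟩ := hx j
  refine ⟨?_, Int.fract_nonneg _, Int.fract_lt_one _⟩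
  obtain ⟨s, hs⟩ : ∃ s : ℤ, stp d n p j = s / n := by
    by_cases hj : j = p.1
    · subst hj
      refine ⟨if p.2 then 1 else -1, ?_⟩
      simp only [stp, Pi.single_eq_same]
      split_ifs <;> simp
    · exact ⟨0, by simp [stp, hj]⟩
  refine ⟨m + s - n * ⌊x j + stp d n p j⌋, ?_⟩
  simp only [nb, Int.fract]
  set k := ⌊x j + stp d n p j⌋
  rw [hm, hs]
  push_cast
  field_simp

lemma nb_eq_add {d n : ℕ} (x : Fin d → ℝ) (p : Fin d × Bool) :
    ∃ v : Fin d → ℤ, ∀ j, nb d n x p j = x j + stp d n p j + (v j : ℝ) :=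
  ⟨fun j => -⌊x j + stp d n p j⌋, fun j => by simp only [nb, Int.fract]; push_cast; ring⟩

lemma nbrT_nb {d n : ℕ} (x : Fin d → ℝ) (p : Fin d × Bool) : NbrT d n x (nb d n x p) := by
  obtain ⟨v, hv⟩ := nb_eq_add (n := n) x p
  refine ⟨p.1, if p.2 then 1 else -1, by split_ifs <;> simp, v, fun j => ?_⟩
  rw [hv, stp, Pi.single_apply]

lemma nbrT_symm {d n : ℕ} {x y : Fin d → ℝ} (h : NbrT d n x y) : NbrT d n y x := by
  obtain ⟨i, s, hs, v, hv⟩ := h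
  refine ⟨i, -s, by rcases hs with rfl | rfl <;> simp, fun j => -v j, fun j => ?_⟩
  rw [hv j]
  split_ifs <;> push_cast <;> ring

/-- An integer of absolute value at most `2/n < 1` vanishes: this is how wrapping around the torus
is excluded when comparing neighbours. -/
lemma int_of_small {n : ℕ} (hn : 3 ≤ n) {t : ℝ} {m : ℤ} (h : t = m) (ht : |t| ≤ 2 / n) :
    t = 0 := by
  have hn' : (3 : ℝ) ≤ n := by exact_mod_cast hn
  have h1 : |t| < 1 := ht.trans_lt (by rw [div_lt_one (by linarith)]; linarith)
  rw [h, ← Int.cast_abs] at h1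
  have h2 : |m| < 1 := by exact_mod_cast h1
  rw [h, Int.abs_lt_one_iff.1 h2, Int.cast_zero]

lemma abs_stp_le {d n : ℕ} (p : Fin d × Bool) (j : Fin d) : |stp d n p j| ≤ 1 / n := by
  rw [stp, Pi.single_apply]
  split_ifs <;> simp [abs_div]

lemma nb_ne {d n : ℕ} (hn : 3 ≤ n) (x : Fin d → ℝ) (p : Fin d × Bool) : nb d n x p ≠ x := by
  intro h
  have hn' : (3 : ℝ) ≤ n := by exact_mod_cast hn
  obtain ⟨v, hv⟩ := nb_eq_add (n := n) x p
  have h1 := hv p.1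
  rw [h] at h1
  have h2 : stp d n p p.1 = 0 := by
    refine int_of_small hn (m := -v p.1) (by push_cast; linarith) ?_
    refine (abs_stp_le p _).trans ?_
    gcongr
    norm_num
  rw [stp, Pi.single_eq_same] at h2
  have : (n : ℝ) ≠ 0 := by linarith
  refine div_ne_zero ?_ this h2
  split_ifs <;> norm_num

lemma nb_inj {d n : ℕ} (hn : 3 ≤ n) (x : Fin d → ℝ) : Function.Injective (nb d n x) := by
  intro p q h
  have hn' : (3 : ℝ) ≤ n := by exact_mod_cast hn
  obtain ⟨v, hv⟩ := nb_eq_add (n := n) x p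
  obtain ⟨w, hw⟩ := nb_eq_add (n := n) x q
  have key : ∀ j, stp d n p j = stp d n q j := by
    intro j
    have h1 := hv j
    rw [h, hw j] at h1
    refine sub_eq_zero.1 (int_of_small hn (m := w j - v j) (by push_cast; linarith) ?_)
    refine (abs_sub _ _).trans ?_
    have := abs_stp_le (n := n) p j
    have := abs_stp_le (n := n) q j
    rw [show (2 : ℝ) / n = 1 / n + 1 / n by ring]
    linarith
  have hn0 : (n : ℝ) ≠ 0 := by linarith
  have h1 : p.1 = q.1 := by
    by_contra hne
    have := key p.1
    simp only [stp, Pi.single_eq_same, Pi.single_eq_of_ne hne] at this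
    refine div_ne_zero ?_ hn0 this
    split_ifs <;> norm_num
  have h2 := key p.1
  simp only [stp, Pi.single_eq_same, h1] at h2
  rw [div_left_inj' hn0] at h2
  refine Prod.ext h1 ?_
  cases hp : p.2 <;> cases hq : q.2 <;> simp only [hp, hq] at h2 ⊢ <;> norm_num at h2

/-- For `n ≥ 3` the `2d` neighbours of a lattice point are distinct, so sums over
neighbours are sums over signed directions. -/
lemma sum_nbr {d n : ℕ} (hn : 3 ≤ n) {x : Fin d → ℝ} (hx : x ∈ XiT d n)
    (f : (Fin d → ℝ) → ℝ) :
    ∑ y ∈ (XiT d n).erase x, (if NbrT d n x y then f y else 0) = ∑ p, f (nb d n x p) := by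
  have hn0 : 0 < n := by omega
  rw [← Finset.sum_filter]
  symm
  refine Finset.sum_bij (fun p _ => nb d n x p) ?_ (fun p _ q _ h => nb_inj hn x h) ?_
    (fun _ _ => rfl)
  · intro p _
    simp only [Finset.mem_filter, Finset.mem_erase]
    exact ⟨⟨nb_ne hn x p, nb_mem hn0 hx p⟩, nbrT_nb x p⟩
  · intro y hy
    simp only [Finset.mem_filter, Finset.mem_erase] at hy
    obtain ⟨⟨-, hyX⟩, i, s, hs, v, hv⟩ := hy
    refine ⟨(i, decide (s = 1)), Finset.mem_univ _, ?_⟩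
    funext j
    obtain ⟨-, h0, h1⟩ := (mem_XiT hn0 y).1 hyX j
    have : x j + stp d n (i, decide (s = 1)) j = y j - (v j : ℤ) := by
      rw [hv j, stp, Pi.single_apply]
      rcases hs with rfl | rfl <;> norm_num
    simp only [nb]
    rw [this, Int.fract_sub_intCast, Int.fract_eq_self.2 ⟨h0, h1⟩]

lemma XiT_nonempty {d n : ℕ} (hn : 0 < n) : (XiT d n).Nonempty :=
  ⟨0, (mem_XiT hn _).2 fun _ => ⟨⟨0, by simp⟩, by simp, by simp⟩⟩

/-- Expanding the square in `ℐ_n` and symmetrizing: the partition function cancels and `ℐ_n`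
becomes a linear term minus `∑ √(μ(x) μ(y))` over ordered pairs of neighbours. -/
lemma IT_eq {d n : ℕ} (hn : 3 ≤ n) (F : (Fin d → ℝ) → ℝ) (μ : (Fin d → ℝ) → ℝ)
    (hμ : ∀ x ∈ XiT d n, 0 ≤ μ x) :
    IT d F n μ = ∑ x ∈ XiT d n, ∑ p,
      (μ x * Real.exp (-((n : ℝ) / 2) * (F (nb d n x p) - F x))
        - √(μ x) * √(μ (nb d n x p))) := by
  have hZ : 0 < ZT d F n := Finset.sum_pos (fun _ _ => Real.exp_pos _) (XiT_nonempty (by omega))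
  have hsq : ∀ x, √(piT d F n x) = Real.exp (-((n : ℝ) / 2) * F x) / √(ZT d F n) := by
    intro x
    rw [piT, Real.sqrt_div (Real.exp_pos _).le]
    congr 1
    rw [Real.sqrt_eq_iff_mul_self_eq (Real.exp_pos _).le (Real.exp_pos _).le, ← Real.exp_add]
    ring_nf
  have hs2 : √(ZT d F n) ^ 2 = ZT d F n := Real.sq_sqrt hZ.le
  have hs0 : √(ZT d F n) ≠ 0 := (Real.sqrt_pos.2 hZ).ne'
  set g : (Fin d → ℝ) → (Fin d → ℝ) → ℝ := fun x y =>
    μ x * Real.exp (-((n : ℝ) / 2) * (F y - F x)) - √(μ x) * √(μ y) with hg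
  have hterm : ∀ x ∈ XiT d n, ∀ y ∈ XiT d n,
      piT d F n x * RT d F n x y *
        (Real.sqrt (μ y / piT d F n y) - Real.sqrt (μ x / piT d F n x)) ^ 2 =
      (if NbrT d n x y then g x y else 0) + (if NbrT d n y x then g y x else 0) := by
    intro x hx y hy
    by_cases h : NbrT d n x y
    · rw [if_pos h, if_pos (nbrT_symm h), RT, if_pos h, Real.sqrt_div (hμ y hy),
        Real.sqrt_div (hμ x hx), hsq, hsq]
      have e1 : Real.exp (-(n : ℝ) * F x) = Real.exp (-((n : ℝ) / 2) * F x) ^ 2 := by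
        rw [← Real.exp_nat_mul]; ring_nf
      have e2 : Real.exp (-((n : ℝ) / 2) * (F y - F x)) =
          Real.exp (-((n : ℝ) / 2) * F y) / Real.exp (-((n : ℝ) / 2) * F x) := by
        rw [← Real.exp_sub]; ring_nf
      have e3 : Real.exp (-((n : ℝ) / 2) * (F x - F y)) =
          Real.exp (-((n : ℝ) / 2) * F x) / Real.exp (-((n : ℝ) / 2) * F y) := by
        rw [← Real.exp_sub]; ring_nf
      have hx2 : √(μ x) ^ 2 = μ x := Real.sq_sqrt (hμ x hx)
      have hy2 : √(μ y) ^ 2 = μ y := Real.sq_sqrt (hμ y hy)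
      simp only [hg, piT]
      rw [e1, e2, e3]
      have := (Real.exp_pos (-((n : ℝ) / 2) * F x)).ne'
      have := (Real.exp_pos (-((n : ℝ) / 2) * F y)).ne'
      generalize Real.exp (-((n : ℝ) / 2) * F x) = a at *
      generalize Real.exp (-((n : ℝ) / 2) * F y) = b at *
      generalize √(μ x) = u at *
      generalize √(μ y) = v at *
      generalize √(ZT d F n) = S at *
      rw [← hx2, ← hy2, ← hs2]
      field_simp
      ring
    · rw [if_neg h, if_neg (fun h' => h (nbrT_symm h')), RT, if_neg h]
      simp
  have hA : ∑ x ∈ XiT d n, ∑ y ∈ (XiT d n).erase x, (if NbrT d n y x then g y x else 0) =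
      ∑ x ∈ XiT d n, ∑ y ∈ (XiT d n).erase x, (if NbrT d n x y then g x y else 0) := by
    rw [Finset.sum_comm' (t' := XiT d n) (s' := fun y => (XiT d n).erase y)]
    intro x y
    simp only [Finset.mem_erase]
    tauto
  have hB : IT d F n μ =
      ∑ x ∈ XiT d n, ∑ y ∈ (XiT d n).erase x, (if NbrT d n x y then g x y else 0) := by
    rw [IT, Finset.sum_congr rfl fun x hx => Finset.sum_congr rfl fun y hy =>
      hterm x hx y (Finset.mem_of_mem_erase hy)]
    simp only [Finset.sum_add_distrib]
    rw [hA]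
    ring
  rw [hB]
  exact Finset.sum_congr rfl fun x hx => sum_nbr hn hx (g x)

/-- Convexity of `ℐ_n`: in `IT_eq` the first term is linear in `μ`, and `√(μ(x) μ(y))` is
superadditive by the Cauchy-Schwarz inequality. -/
lemma IT_convex {d n : ℕ} (hn : 3 ≤ n) (F : (Fin d → ℝ) → ℝ) {ι : Type*} (K : Finset ι)
    (q : ι → ℝ) (hq : ∀ z ∈ K, 0 ≤ q z) (ν : ι → (Fin d → ℝ) → ℝ)
    (hν : ∀ z ∈ K, ∀ x ∈ XiT d n, 0 ≤ ν z x) :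
    IT d F n (fun x => ∑ z ∈ K, q z * ν z x) ≤ ∑ z ∈ K, q z * IT d F n (ν z) := by
  rw [IT_eq hn F _ fun x hx => Finset.sum_nonneg fun z hz => mul_nonneg (hq z hz) (hν z hz x hx)]
  have h0 : ∑ z ∈ K, q z * IT d F n (ν z) = ∑ x ∈ XiT d n, ∑ p, ∑ z ∈ K,
      (q z * (ν z x * Real.exp (-((n : ℝ) / 2) * (F (nb d n x p) - F x)))
        - q z * (√(ν z x) * √(ν z (nb d n x p)))) := by
    rw [Finset.sum_congr rfl fun z hz => congrArg (q z * ·) (IT_eq hn F (ν z) (hν z hz))]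
    simp only [Finset.mul_sum, mul_sub]
    rw [Finset.sum_comm]
    exact Finset.sum_congr rfl fun x _ => Finset.sum_comm
  rw [h0]
  refine Finset.sum_le_sum fun x hx => Finset.sum_le_sum fun p _ => ?_
  rw [Finset.sum_sub_distrib]
  have hy := nb_mem (by omega) hx p
  have h1 : ∑ z ∈ K, q z * (√(ν z x) * √(ν z (nb d n x p))) ≤
      √(∑ z ∈ K, q z * ν z x) * √(∑ z ∈ K, q z * ν z (nb d n x p)) := by
    refine le_trans (le_of_eq ?_) ((Real.sum_mul_le_sqrt_mul_sqrt K (fun z => √(q z * ν z x))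
      (fun z => √(q z * ν z (nb d n x p)))).trans_eq ?_)
    · refine Finset.sum_congr rfl fun z hz => ?_
      rw [Real.sqrt_mul (hq z hz), Real.sqrt_mul (hq z hz)]
      have := Real.mul_self_sqrt (hq z hz)
      linear_combination (-√(ν z x) * √(ν z (nb d n x p))) * this
    · congr 2 <;> exact Finset.sum_congr rfl fun z hz =>
        Real.sq_sqrt (mul_nonneg (hq z hz) (hν z hz _ (by assumption)))
  rw [Finset.sum_mul]
  have h2 : ∀ z, q z * (ν z x * Real.exp (-((n : ℝ) / 2) * (F (nb d n x p) - F x))) =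
    q z * ν z x * Real.exp (-((n : ℝ) / 2) * (F (nb d n x p) - F x)) := fun z => by ring
  simp only [h2]
  linarith

/-! ### The absolute value of the Hessian and second-order expansions -/

/-- The matrix `A = |H|`, diagonal in an eigenbasis of `H` with the absolute values of its
eigenvalues: `A² = H²`, `tr A - tr H` is twice the negative part of the spectrum, and `A` is
coercive as `H` is nondegenerate. -/
lemma exists_absMat {d : ℕ} {H : Matrix (Fin d) (Fin d) ℝ} (hH : H.IsHermitian)
    (hne : ∀ i, hH.eigenvalues i ≠ 0) :
    ∃ A : Matrix (Fin d) (Fin d) ℝ, A.transpose = A ∧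
      A.trace - H.trace = 2 * ∑ i, max (-hH.eigenvalues i) 0 ∧
      (∀ w, (A.mulVec w) ⬝ᵥ (A.mulVec w) = (H.mulVec w) ⬝ᵥ (H.mulVec w)) ∧
      ∃ c > 0, ∀ w, c * (w ⬝ᵥ w) ≤ w ⬝ᵥ (A.mulVec w) := by
  set V : Matrix (Fin d) (Fin d) ℝ := (hH.eigenvectorUnitary).1 with hV
  have hVV : V.transpose * V = 1 := by
    have := Unitary.coe_star_mul_self hH.eigenvectorUnitary
    simpa [Matrix.star_eq_conjTranspose] using this
  have hVV' : V * V.transpose = 1 := mul_eq_one_comm.1 hVV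
  set lam := hH.eigenvalues with hlam
  have hspec : H = V * Matrix.diagonal lam * V.transpose := by
    have := hH.spectral_theorem
    rw [Unitary.conjStarAlgAut_apply] at this
    simpa [Matrix.star_eq_conjTranspose, Function.comp_def] using this
  have hT : ∀ f : Fin d → ℝ, (V * Matrix.diagonal f * V.transpose).transpose =
      V * Matrix.diagonal f * V.transpose := fun f => by
    simp [Matrix.transpose_mul, Matrix.mul_assoc]
  have htr : ∀ f : Fin d → ℝ, (V * Matrix.diagonal f * V.transpose).trace = ∑ i, f i := fun f => by
    rw [Matrix.trace_mul_comm, ← Matrix.mul_assoc, hVV, Matrix.one_mul, Matrix.trace_diagonal]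
  have hsq : ∀ f : Fin d → ℝ, (V * Matrix.diagonal f * V.transpose) *
      (V * Matrix.diagonal f * V.transpose) =
      V * Matrix.diagonal (fun i => f i * f i) * V.transpose := fun f => by
    calc _ = V * Matrix.diagonal f * (V.transpose * V) * Matrix.diagonal f * V.transpose := by
          simp only [Matrix.mul_assoc]
      _ = _ := by
          rw [hVV, Matrix.mul_one, Matrix.mul_assoc V, Matrix.diagonal_mul_diagonal]
  have hnorm : ∀ (M : Matrix (Fin d) (Fin d) ℝ), M.transpose = M → ∀ w,
      (M.mulVec w) ⬝ᵥ (M.mulVec w) = w ⬝ᵥ ((M * M).mulVec w) := fun M hM w => by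
    rw [← Matrix.mulVec_mulVec, Matrix.dotProduct_mulVec w, ← Matrix.mulVec_transpose, hM]
  have hdot : ∀ w, (V.transpose.mulVec w) ⬝ᵥ (V.transpose.mulVec w) = w ⬝ᵥ w := fun w => by
    rw [Matrix.dotProduct_mulVec, ← Matrix.mulVec_transpose, Matrix.transpose_transpose,
      Matrix.mulVec_mulVec, hVV', Matrix.one_mulVec]
  refine ⟨V * Matrix.diagonal (fun i => |lam i|) * V.transpose, hT _, ?_, ?_, ?_⟩
  · rw [htr]
    nth_rewrite 1 [hspec]
    rw [htr, ← Finset.sum_sub_distrib, Finset.mul_sum]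
    refine Finset.sum_congr rfl fun i _ => ?_
    rcases le_total 0 (lam i) with h | h
    · rw [abs_of_nonneg h, max_eq_right (by linarith)]; ring
    · rw [abs_of_nonpos h, max_eq_left (by linarith)]; ring
  · intro w
    have hHT : H.transpose = H := by rw [hspec]; exact hT _
    rw [hnorm _ (hT _), hnorm H hHT, hsq]
    have : H * H = V * Matrix.diagonal (fun i => lam i * lam i) * V.transpose := by
      rw [← hsq, ← hspec]
    rw [this]
    simp only [abs_mul_abs_self]
  · obtain ⟨c, hc, hcl⟩ : ∃ c > 0, ∀ i, c ≤ |lam i| := by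
      rcases isEmpty_or_nonempty (Fin d) with h | h
      · exact ⟨1, one_pos, fun i => h.elim i⟩
      · obtain ⟨i, hi⟩ := Finite.exists_min fun i => |lam i|
        exact ⟨_, abs_pos.2 (hne i), hi⟩
    refine ⟨c, hc, fun w => ?_⟩
    rw [Matrix.mul_assoc, ← Matrix.mulVec_mulVec, Matrix.dotProduct_mulVec,
      ← Matrix.mulVec_transpose, ← Matrix.mulVec_mulVec, ← hdot w]
    generalize V.transpose.mulVec w = u
    simp only [dotProduct, Finset.mul_sum, Matrix.mulVec_diagonal]
    refine Finset.sum_le_sum fun i _ => ?_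
    nlinarith [hcl i, mul_self_nonneg (u i)]

/-- Second-order expansion of `n (e^{-p/2} + e^{-q/2} - 2)` when `p ≈ b`, `q ≈ -b` and
`n (p + q) ≈ h`. -/
lemma exp_pair {C r n b h p q : ℝ} (hC : 0 ≤ C) (hr : 0 ≤ r) (hr1 : r ≤ 1) (hCr : C * r ≤ 1)
    (hn : 0 ≤ n) (hb : |b| ≤ C * r) (hp : |p - b| ≤ C * r ^ 2) (hq : |q + b| ≤ C * r ^ 2)
    (hpq : |n * (p + q) - h| ≤ C * r) :
    |n * ((Real.exp (-p / 2) - 1) + (Real.exp (-q / 2) - 1)) - (n / 4 * b ^ 2 - h / 2)| ≤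
      (C + C ^ 2 + 2 * C ^ 3) * (r + n * r ^ 3) := by
  have hr2 : r ^ 2 ≤ r := by nlinarith
  have hexp : ∀ u : ℝ, |u| ≤ 2 * C * r →
      |Real.exp (-u / 2) - 1 - (-u / 2) - (-u / 2) ^ 2 / 2| ≤ C ^ 3 * r ^ 3 := by
    intro u hu
    have h1 : |-u / 2| ≤ C * r := by
      rw [abs_div, abs_neg, abs_two]; linarith
    have := Real.exp_bound (h1.trans hCr) (n := 3) (by norm_num)
    simp only [Finset.sum_range_succ, Finset.sum_range_zero] at this
    norm_num [Nat.factorial] at this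
    have h2 : |-u / 2| ^ 3 ≤ (C * r) ^ 3 := by gcongr
    rw [show Real.exp (-u / 2) - 1 - (-u / 2) - (-u / 2) ^ 2 / 2 =
      Real.exp (-u / 2) - (1 + -u / 2 + (-u / 2) ^ 2 / 2) by ring]
    have h3 : (0 : ℝ) ≤ |-u / 2| ^ 3 := by positivity
    rw [mul_pow] at h2
    refine this.trans ?_
    linarith
  have hCr2 : C * r ^ 2 ≤ C * r := by gcongr
  have hp1 : |p| ≤ 2 * C * r := by
    have := abs_add_le (p - b) b
    rw [sub_add_cancel] at this; linarith
  have hq1 : |q| ≤ 2 * C * r := by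
    have := abs_sub (q + b) b
    rw [add_sub_cancel_right] at this; linarith
  have hsp : |p ^ 2 - b ^ 2| ≤ 3 * C ^ 2 * r ^ 3 := by
    rw [show p ^ 2 - b ^ 2 = (p - b) * (p + b) by ring, abs_mul]
    calc _ ≤ (C * r ^ 2) * (3 * C * r) := by
          gcongr
          have := abs_add_le p b
          linarith
      _ = _ := by ring
  have hsq : |q ^ 2 - b ^ 2| ≤ 3 * C ^ 2 * r ^ 3 := by
    rw [show q ^ 2 - b ^ 2 = (q + b) * (q - b) by ring, abs_mul]
    calc _ ≤ (C * r ^ 2) * (3 * C * r) := by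
          gcongr
          have := abs_sub q b
          linarith
      _ = _ := by ring
  have e1 := hexp p hp1
  have e2 := hexp q hq1
  have hn3 : 0 ≤ n * r ^ 3 := by positivity
  rw [abs_le] at *
  set a1 := Real.exp (-p / 2) - 1 - (-p / 2) - (-p / 2) ^ 2 / 2
  set a2 := Real.exp (-q / 2) - 1 - (-q / 2) - (-q / 2) ^ 2 / 2
  have key : n * ((Real.exp (-p / 2) - 1) + (Real.exp (-q / 2) - 1)) - (n / 4 * b ^ 2 - h / 2) =
      n * (a1 + a2) - (n * (p + q) - h) / 2 +
        n * ((p ^ 2 - b ^ 2) + (q ^ 2 - b ^ 2)) / 8 := by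
    simp only [a1, a2]; ring
  rw [key]
  have m1 : n * (a1 + a2) ≤ n * (2 * (C ^ 3 * r ^ 3)) :=
    mul_le_mul_of_nonneg_left (by linarith) hn
  have m2 : n * (-(2 * (C ^ 3 * r ^ 3))) ≤ n * (a1 + a2) :=
    mul_le_mul_of_nonneg_left (by linarith) hn
  have m3 : n * ((p ^ 2 - b ^ 2) + (q ^ 2 - b ^ 2)) ≤ n * (6 * C ^ 2 * r ^ 3) :=
    mul_le_mul_of_nonneg_left (by linarith) hn
  have m4 : n * (-(6 * C ^ 2 * r ^ 3)) ≤ n * ((p ^ 2 - b ^ 2) + (q ^ 2 - b ^ 2)) :=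
    mul_le_mul_of_nonneg_left (by linarith) hn
  have g1 : 0 ≤ C * (n * r ^ 3) := by positivity
  have g2 : 0 ≤ C ^ 2 * (n * r ^ 3) := by positivity
  have g3 : 0 ≤ (C ^ 2 + 2 * C ^ 3) * r := by positivity
  have g4 : 0 ≤ C * r := by positivity
  constructor <;> linarith

/-- Lipschitz continuity of the second derivative, transferred from `iteratedFDeriv ℝ 2 F` to the
derivatives of the partial derivatives. -/
lemma fderiv_partial_sub_le {d : ℕ} {F : (Fin d → ℝ) → ℝ} (hF : ContDiff ℝ 2 F) {L : NNReal}
    (hL : LipschitzWith L (iteratedFDeriv ℝ 2 F)) (i : Fin d) (y z : Fin d → ℝ) :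
    ‖fderiv ℝ (fun x => fderiv ℝ F x (Pi.single i 1)) y -
      fderiv ℝ (fun x => fderiv ℝ F x (Pi.single i 1)) z‖ ≤ L * ‖y - z‖ := by
  have hd : Differentiable ℝ (fderiv ℝ F) :=
    (hF.fderiv_right (m := 1) (by norm_num)).differentiable (by norm_num)
  have h1 : ∀ y v, fderiv ℝ (fun x => fderiv ℝ F x (Pi.single i 1)) y v =
      iteratedFDeriv ℝ 2 F y ![v, Pi.single i 1] := by
    intro y v
    rw [iteratedFDeriv_two_apply, fderiv_clm_apply (hd y) (differentiableAt_const _)]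
    simp
  refine ContinuousLinearMap.opNorm_le_bound _ (by positivity) fun v => ?_
  rw [sub_apply, h1, h1, ← sub_apply]
  refine (ContinuousMultilinearMap.le_opNorm _ _).trans ?_
  rw [Fin.prod_univ_two]
  have h2 := hL.dist_le_mul y z
  rw [dist_eq_norm, dist_eq_norm] at h2
  simp only [Matrix.cons_val_zero, Matrix.cons_val_one, Pi.norm_single, norm_one, mul_one]
  gcongr

lemma fderiv_partial_apply {d : ℕ} (F : (Fin d → ℝ) → ℝ) (z : Fin d → ℝ)
    (hH : (HessT d F z).IsHermitian) (i : Fin d) (v : Fin d → ℝ) :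
    fderiv ℝ (fun x => fderiv ℝ F x (Pi.single i 1)) z v = ((HessT d F z).mulVec v) i := by
  have h1 : ∀ a b, HessT d F z a b = HessT d F z b a := fun a b => by
    have := congrFun (congrFun hH b) a
    simpa using this
  conv_lhs => rw [pi_eq_sum_univ' v]
  rw [map_sum]
  simp only [Matrix.mulVec, dotProduct, map_smul, smul_eq_mul]
  refine Finset.sum_congr rfl fun j _ => ?_
  rw [h1 i j, mul_comm]
  simp [HessT]

/-- Taylor expansion along the lattice at scale `r` about a critical point `z`, from a linear
approximation `H` of the gradient `f` whose increments have error `L ρ |y - x|` on the ball of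
radius `ρ` about `z`. -/
lemma taylor_core {d : ℕ} {F : (Fin d → ℝ) → ℝ} {f : Fin d → (Fin d → ℝ) → ℝ}
    {H : Matrix (Fin d) (Fin d) ℝ} {z : Fin d → ℝ} {L M : ℝ} (hL0 : 0 ≤ L) (hM0 : 0 ≤ M)
    (hder : ∀ (i : Fin d) (x : Fin d → ℝ) (t : ℝ),
      HasDerivAt (fun t : ℝ => F (x + Pi.single i t)) (f i (x + Pi.single i t)) t)
    (hfz : ∀ i, f i z = 0)
    (hball : ∀ (i) (ρ : ℝ) (x y : Fin d → ℝ), ‖x - z‖ ≤ ρ → ‖y - z‖ ≤ ρ →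
      |f i y - f i x - (H.mulVec (y - x)) i| ≤ L * ρ * ‖y - x‖)
    (hM : ∀ i v, |(H.mulVec v) i| ≤ M * ‖v‖)
    (n r : ℝ) (w : Fin d → ℝ) (hn : 0 < n) (hr : 0 ≤ r) (hr1 : r ≤ 1) (hnr : 1 / n ≤ r ^ 2)
    (hw : ‖w‖ ≤ r) (i : Fin d) :
    |(H.mulVec w) i| ≤ (M + 8 * L) * r ∧
    |n * (F (z + w + Pi.single i (1 / n)) - F (z + w)) - (H.mulVec w) i|
      ≤ (M + 8 * L) * r ^ 2 ∧
    |n * (F (z + w + Pi.single i (-1 / n)) - F (z + w)) + (H.mulVec w) i|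
      ≤ (M + 8 * L) * r ^ 2 ∧
    |n * (n * (F (z + w + Pi.single i (1 / n)) - F (z + w)) +
      n * (F (z + w + Pi.single i (-1 / n)) - F (z + w))) - H i i| ≤ (M + 8 * L) * r := by
  have hnr' : 1 / n ≤ r := hnr.trans (by nlinarith)
  have hline := hder i (z + w)
  have hnear : ∀ t : ℝ, |t| ≤ 1 / n → ‖z + w + Pi.single i t - z‖ ≤ 2 * r := by
    intro t ht
    rw [show z + w + Pi.single i t - z = w + Pi.single i t by abel]
    refine (norm_add_le _ _).trans ?_
    rw [Pi.norm_single, Real.norm_eq_abs]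
    linarith
  have hbd1 : ∀ t : ℝ, |t| ≤ 1 / n → |f i (z + w + Pi.single i t) - (H.mulVec w) i| ≤
      (M + 4 * L) * r ^ 2 := by
    intro t ht
    have h2 := hnear t ht
    have h0 : ‖z - z‖ ≤ 2 * r := by rw [sub_self, norm_zero]; linarith
    have h1 := hball i (2 * r) z _ h0 h2
    rw [show z + w + Pi.single i t - z = w + Pi.single i t by abel] at h1 h2
    rw [Matrix.mulVec_add, Pi.add_apply, hfz, sub_zero] at h1
    have h3 := hM i (Pi.single i t)
    rw [Pi.norm_single, Real.norm_eq_abs] at h3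
    have h4 : M * |t| ≤ M * r ^ 2 := by gcongr; linarith
    have h5 : L * (2 * r) * ‖w + Pi.single i t‖ ≤ L * (2 * r) * (2 * r) := by gcongr
    have h6 := abs_add_le (f i (z + w + Pi.single i t) - ((H.mulVec w) i +
      (H.mulVec (Pi.single i t)) i)) ((H.mulVec (Pi.single i t)) i)
    rw [show f i (z + w + Pi.single i t) - ((H.mulVec w) i +
      (H.mulVec (Pi.single i t)) i) + ((H.mulVec (Pi.single i t)) i) =
      f i (z + w + Pi.single i t) - (H.mulVec w) i by ring] at h6
    have h7 : L * (2 * r) * (2 * r) = 4 * L * r ^ 2 := by ring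
    linarith
  have hn1 : 0 < 1 / n := by positivity
  have hbd2 : ∀ t : ℝ, |t| ≤ 1 / n →
      |F (z + w + Pi.single i t) - F (z + w) - t * (H.mulVec w) i| ≤
        (M + 4 * L) * r ^ 2 * |t| := by
    intro t ht
    have := (convex_Icc (-(1 / n)) (1 / n)).norm_image_sub_le_of_norm_hasDerivWithin_le
      (f := fun t : ℝ => F (z + w + Pi.single i t) - t * (H.mulVec w) i)
      (f' := fun t => f i (z + w + Pi.single i t) - (H.mulVec w) i)
      (C := (M + 4 * L) * r ^ 2) (x := 0) (y := t)
      (fun u _ => ((hline u).sub (by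
        simpa using (hasDerivAt_id u).mul_const ((H.mulVec w) i))).hasDerivWithinAt)
      (fun u hu => hbd1 u (abs_le.2 hu)) ⟨by linarith, hn1.le⟩ (abs_le.1 ht)
    simp only [Pi.single_zero, add_zero, zero_mul, sub_zero, Real.norm_eq_abs] at this
    rwa [show F (z + w + Pi.single i t) - t * (H.mulVec w) i - F (z + w) =
      F (z + w + Pi.single i t) - F (z + w) - t * (H.mulVec w) i by ring] at this
  have hscale : ∀ s : ℝ, |s| = 1 → |n * (F (z + w + Pi.single i (s / n)) - F (z + w)) -
      s * (H.mulVec w) i| ≤ (M + 4 * L) * r ^ 2 := by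
    intro s hs
    have hsn : |s / n| = 1 / n := by rw [abs_div, hs, abs_of_pos hn]
    have := hbd2 (s / n) hsn.le
    rw [hsn] at this
    have h2 := mul_le_mul_of_nonneg_left this hn.le
    rw [← abs_of_pos hn, ← abs_mul, abs_of_pos hn] at h2
    refine le_trans (le_of_eq ?_) (h2.trans_eq ?_)
    · congr 1
      field_simp
    · field_simp
  refine ⟨?_, ?_, ?_, ?_⟩
  · refine (hM i w).trans ?_
    gcongr
    linarith
  · have := hscale 1 (by simp)
    rw [one_mul] at this
    refine this.trans ?_
    gcongr
    linarith
  · have := hscale (-1) (by simp)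
    rw [neg_one_mul, sub_neg_eq_add] at this
    refine this.trans ?_
    gcongr
    linarith
  · -- the second difference, through the derivative of its difference with `H i i * t ^ 2`
    have hii : ∀ t : ℝ, (H.mulVec (Pi.single i t)) i = H i i * t := fun t => by
      simp [Matrix.mulVec_single]
    have hdd : ∀ u : ℝ, HasDerivAt (fun t : ℝ => F (z + w + Pi.single i t) +
        F (z + w + Pi.single i (-t)) - H i i * t ^ 2)
        (f i (z + w + Pi.single i u) - f i (z + w + Pi.single i (-u)) - 2 * H i i * u) u := by
      intro u
      have h1 := (hline (-u)).scomp u (hasDerivAt_neg u)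
      refine (((hline u).fun_add h1).fun_sub
        ((hasDerivAt_pow 2 u).const_mul (H i i))).congr_deriv ?_
      simp
      ring
    have := (convex_Icc (-(1 / n)) (1 / n)).norm_image_sub_le_of_norm_hasDerivWithin_le
      (C := 4 * L * r * (1 / n)) (x := 0) (y := 1 / n)
      (fun u _ => (hdd u).hasDerivWithinAt)
      (fun u hu => by
        have hu' : |u| ≤ 1 / n := abs_le.2 hu
        have h1 := hball i (2 * r) _ _ (hnear (-u) (by rwa [abs_neg])) (hnear u hu')
        have h2 : z + w + Pi.single i u - (z + w + Pi.single i (-u)) =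
            (Pi.single i (2 * u) : Fin d → ℝ) := by
          rw [Pi.single_neg, two_mul, Pi.single_add]; abel
        rw [h2, hii, Pi.norm_single, Real.norm_eq_abs, abs_mul, abs_two] at h1
        rw [Real.norm_eq_abs, show 2 * H i i * u = H i i * (2 * u) by ring]
        refine h1.trans ?_
        have : L * r * |u| ≤ L * r * (1 / n) := by gcongr
        linarith)
      ⟨by linarith, hn1.le⟩ ⟨by linarith, le_rfl⟩
    simp only [Pi.single_zero, neg_zero, add_zero, sub_zero, Real.norm_eq_abs] at this
    rw [abs_of_pos hn1] at this
    have h2 := mul_le_mul_of_nonneg_left this (sq_nonneg n)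
    rw [← abs_of_nonneg (sq_nonneg n), ← abs_mul, abs_of_nonneg (sq_nonneg n)] at h2
    have h3 : n ^ 2 * (4 * L * r * (1 / n) * (1 / n)) = 4 * L * r := by field_simp
    rw [h3] at h2
    have h4 : 4 * L * r ≤ (M + 8 * L) * r := by gcongr; linarith
    refine le_trans (le_of_eq ?_) (h2.trans h4)
    congr 1
    rw [neg_div]
    field_simp
    ring

/-- Taylor expansion, at scale `r` about a critical point, of the increments of `F` along
the lattice. -/
lemma taylor_F {d : ℕ} {F : (Fin d → ℝ) → ℝ} (hF : ContDiff ℝ 2 F) {L : NNReal}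
    (hL : LipschitzWith L (iteratedFDeriv ℝ 2 F)) {z : Fin d → ℝ} (hz : fderiv ℝ F z = 0)
    (hH : (HessT d F z).IsHermitian) :
    ∃ C : ℝ, 0 ≤ C ∧ ∀ (n r : ℝ) (w : Fin d → ℝ), 0 < n → 0 ≤ r → r ≤ 1 → 1 / n ≤ r ^ 2 →
      ‖w‖ ≤ r → ∀ i,
      |((HessT d F z).mulVec w) i| ≤ C * r ∧
      |n * (F (z + w + Pi.single i (1 / n)) - F (z + w)) - ((HessT d F z).mulVec w) i|
        ≤ C * r ^ 2 ∧
      |n * (F (z + w + Pi.single i (-1 / n)) - F (z + w)) + ((HessT d F z).mulVec w) i|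
        ≤ C * r ^ 2 ∧
      |n * (n * (F (z + w + Pi.single i (1 / n)) - F (z + w)) +
        n * (F (z + w + Pi.single i (-1 / n)) - F (z + w))) - HessT d F z i i| ≤ C * r := by
  set H := HessT d F z with hHdef
  have hd : Differentiable ℝ (fderiv ℝ F) :=
    (hF.fderiv_right (m := 1) (by norm_num)).differentiable (by norm_num)
  have hFd : Differentiable ℝ F := hF.differentiable (by norm_num)
  set f : Fin d → (Fin d → ℝ) → ℝ := fun i x => fderiv ℝ F x (Pi.single i 1) with hf
  have hfd : ∀ i, Differentiable ℝ (f i) := fun i => hd.clm_apply (differentiable_const _)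
  have hfz : ∀ i, f i z = 0 := fun i => by simp [hf, hz]
  have hlin : ∀ i v, fderiv ℝ (f i) z v = (H.mulVec v) i := fun i v =>
    fderiv_partial_apply F z hH i v
  -- the partial derivatives are linear about `z` up to a second-order error
  have hball : ∀ (i) (ρ : ℝ) (x y : Fin d → ℝ), ‖x - z‖ ≤ ρ → ‖y - z‖ ≤ ρ →
      |f i y - f i x - (H.mulVec (y - x)) i| ≤ L * ρ * ‖y - x‖ := by
    intro i ρ x y hx hy
    have := (convex_closedBall z ρ).norm_image_sub_le_of_norm_hasFDerivWithin_le'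
      (f := f i) (f' := fderiv ℝ (f i)) (φ := fderiv ℝ (f i) z) (C := L * ρ) (x := x) (y := y)
      (fun u _ => (hfd i u).hasFDerivAt.hasFDerivWithinAt)
      (fun u hu => (fderiv_partial_sub_le hF hL i u z).trans (by
        have : ‖u - z‖ ≤ ρ := by simpa [dist_eq_norm] using hu
        gcongr))
      (by simpa [dist_eq_norm] using hx) (by simpa [dist_eq_norm] using hy)
    rwa [hlin, Real.norm_eq_abs] at this
  obtain ⟨M, hM0, hM⟩ : ∃ M : ℝ, 0 ≤ M ∧ ∀ i v, |(H.mulVec v) i| ≤ M * ‖v‖ := by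
    refine ⟨∑ i, ‖fderiv ℝ (f i) z‖, Finset.sum_nonneg fun _ _ => norm_nonneg _, fun i v => ?_⟩
    rw [← hlin, ← Real.norm_eq_abs]
    refine (ContinuousLinearMap.le_opNorm _ _).trans ?_
    gcongr
    exact Finset.single_le_sum (f := fun i => ‖fderiv ℝ (f i) z‖)
      (fun _ _ => norm_nonneg _) (Finset.mem_univ i)
  refine ⟨M + 8 * L, by positivity, fun n r w hn hr hr1 hnr hw i =>
    taylor_core L.2 hM0 ?_ hfz hball hM n r w hn hr hr1 hnr hw i⟩
  intro i x t
  have h1 : HasDerivAt (fun t : ℝ => x + Pi.single i t) (Pi.single i 1) t := by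
    have h2 : (fun t : ℝ => x + Pi.single i t) = fun t : ℝ => x + t • Pi.single i (1 : ℝ) := by
      funext t
      rw [← Pi.single_smul]; simp
    rw [h2]
    simpa using ((hasDerivAt_id t).smul_const (Pi.single i (1 : ℝ) : Fin d → ℝ)).const_add x
  exact (hFd _).hasFDerivAt.comp_hasDerivAt t h1

/-- The lemma `taylor_F` for the quadratic form `w ↦ w ⬝ A w / 2`. -/
lemma taylor_S {d : ℕ} {A : Matrix (Fin d) (Fin d) ℝ} (hA : A.transpose = A) {M : ℝ}
    (hM0 : 0 ≤ M) (hM : ∀ i v, |(A.mulVec v) i| ≤ M * ‖v‖) (n r : ℝ) (w : Fin d → ℝ)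
    (hn : 0 < n) (hr : 0 ≤ r) (hnr : 1 / n ≤ r ^ 2) (hw : ‖w‖ ≤ r) (i : Fin d)
    {S : (Fin d → ℝ) → ℝ} (hS : ∀ w, S w = (w ⬝ᵥ A.mulVec w) / 2) :
    |(A.mulVec w) i| ≤ M * r ∧
    |n * (S (w + Pi.single i (1 / n)) - S w) - (A.mulVec w) i| ≤ M * r ^ 2 ∧
    |n * (S (w + Pi.single i (-1 / n)) - S w) + (A.mulVec w) i| ≤ M * r ^ 2 ∧
    |n * (n * (S (w + Pi.single i (1 / n)) - S w) +
      n * (S (w + Pi.single i (-1 / n)) - S w)) - A i i| ≤ M * r := by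
  have hii : |A i i| ≤ M := by
    have := hM i (Pi.single i 1)
    rw [Pi.norm_single, norm_one, mul_one] at this
    simpa [Matrix.mulVec_single] using this
  have hinc : ∀ t : ℝ, S (w + Pi.single i t) - S w = t * (A.mulVec w) i + t ^ 2 / 2 * A i i := by
    intro t
    have h1 : w ⬝ᵥ A.mulVec (Pi.single i t) = t * (A.mulVec w) i := by
      rw [Matrix.dotProduct_mulVec, ← Matrix.mulVec_transpose, hA, dotProduct_single, mul_comm]
    have h2 : (Pi.single i t : Fin d → ℝ) ⬝ᵥ A.mulVec (Pi.single i t) = t ^ 2 * A i i := by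
      simp [Matrix.mulVec_single]
      ring
    rw [hS, hS, Matrix.mulVec_add, add_dotProduct, dotProduct_add, dotProduct_add, h1, h2,
      single_dotProduct]
    ring
  have hn1 : 0 < 1 / n := by positivity
  have hsmall : |1 / n / 2 * A i i| ≤ M * r ^ 2 := by
    rw [abs_mul, abs_of_pos (by positivity)]
    calc _ ≤ r ^ 2 * M := by gcongr; linarith
      _ = _ := by ring
  refine ⟨(hM i w).trans (by gcongr), ?_, ?_, ?_⟩
  · rw [hinc]
    refine le_trans (le_of_eq ?_) hsmall
    congr 1; field_simp; ring
  · rw [hinc]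
    refine le_trans (le_of_eq ?_) hsmall
    congr 1; field_simp; ring
  · rw [hinc, hinc]
    have : n * (n * (1 / n * (A.mulVec w) i + (1 / n) ^ 2 / 2 * A i i) +
        n * (-1 / n * (A.mulVec w) i + (-1 / n) ^ 2 / 2 * A i i)) - A i i = 0 := by
      field_simp; ring
    rw [this, abs_zero]
    positivity

/-- Replacing the trial potential `S(w) = w ⬝ |H| w / 2` for `F` in the discrete generator costs
`(tr |H| - tr H) / 2` near the critical point, since the quadratic terms `|H w|²` and `||H| w|²`
cancel. -/
lemma bracket_le {d : ℕ} {F : (Fin d → ℝ) → ℝ} (hF : ContDiff ℝ 2 F) {L : NNReal}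
    (hL : LipschitzWith L (iteratedFDeriv ℝ 2 F)) {z : Fin d → ℝ} (hz : fderiv ℝ F z = 0)
    (hH : (HessT d F z).IsHermitian) {A : Matrix (Fin d) (Fin d) ℝ} (hA : A.transpose = A)
    (hAH : ∀ w, (A.mulVec w) ⬝ᵥ (A.mulVec w) =
      ((HessT d F z).mulVec w) ⬝ᵥ ((HessT d F z).mulVec w)) {M : ℝ}
    (hM0 : 0 ≤ M) (hM : ∀ i v, |(A.mulVec v) i| ≤ M * ‖v‖)
    {S : (Fin d → ℝ) → ℝ} (hS : ∀ w, S w = (w ⬝ᵥ A.mulVec w) / 2) :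
    ∃ K r₀ : ℝ, 0 < r₀ ∧ ∀ (n r : ℝ) (w : Fin d → ℝ), 0 < n → 0 ≤ r → r ≤ 1 → r ≤ r₀ →
      1 / n ≤ r ^ 2 → ‖w‖ ≤ r →
      n * ∑ i, ((Real.exp (-(n * (F (z + w + Pi.single i (1 / n)) - F (z + w))) / 2) +
            Real.exp (-(n * (F (z + w + Pi.single i (-1 / n)) - F (z + w))) / 2)) -
          (Real.exp (-(n * (S (w + Pi.single i (1 / n)) - S w)) / 2) +
            Real.exp (-(n * (S (w + Pi.single i (-1 / n)) - S w)) / 2))) ≤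
        (A.trace - (HessT d F z).trace) / 2 + K * (r + n * r ^ 3) := by
  obtain ⟨C, hC0, hC⟩ := taylor_F hF hL hz hH
  generalize HessT d F z = H at *
  refine ⟨∑ _i : Fin d, ((C + C ^ 2 + 2 * C ^ 3) + (M + M ^ 2 + 2 * M ^ 3)), 1 / (1 + C + M),
    by positivity, ?_⟩
  intro n r w hn hr hr1 hr0 hnr hw
  have hr0' : r * (1 + C + M) ≤ 1 := (le_div_iff₀ (by positivity)).1 hr0
  have g1 : 0 ≤ C * r := by positivity
  have g2 : 0 ≤ M * r := by positivity
  have hquad : ∑ i, ((A.mulVec w) i ^ 2) = ∑ i, ((H.mulVec w) i ^ 2) := by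
    have := hAH w
    simpa [dotProduct, sq] using this
  have hterm : ∀ i, n * ((Real.exp (-(n * (F (z + w + Pi.single i (1 / n)) - F (z + w))) / 2) +
            Real.exp (-(n * (F (z + w + Pi.single i (-1 / n)) - F (z + w))) / 2)) -
          (Real.exp (-(n * (S (w + Pi.single i (1 / n)) - S w)) / 2) +
            Real.exp (-(n * (S (w + Pi.single i (-1 / n)) - S w)) / 2))) ≤
      n / 4 * ((H.mulVec w) i ^ 2 - (A.mulVec w) i ^ 2) + (A i i - H i i) / 2 +
        ((C + C ^ 2 + 2 * C ^ 3) + (M + M ^ 2 + 2 * M ^ 3)) * (r + n * r ^ 3) := by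
    intro i
    obtain ⟨h1, h2, h3, h4⟩ := hC n r w hn hr hr1 hnr hw i
    obtain ⟨k1, k2, k3, k4⟩ := taylor_S hA hM0 hM n r w hn hr hnr hw i hS
    have e1 := (abs_le.1 (exp_pair hC0 hr hr1 (by linarith) hn.le h1 h2 h3 h4)).2
    have e2 := (abs_le.1 (exp_pair hM0 hr hr1 (by linarith) hn.le k1 k2 k3 k4)).1
    linarith
  rw [Finset.mul_sum]
  refine (Finset.sum_le_sum fun i _ => hterm i).trans (le_of_eq ?_)
  rw [Finset.sum_add_distrib, Finset.sum_add_distrib, ← Finset.mul_sum, Finset.sum_sub_distrib,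
    hquad, sub_self, ← Finset.sum_div, Finset.sum_sub_distrib, ← Finset.sum_mul]
  simp only [Matrix.trace, Matrix.diag]
  ring

/-! ### Coordinates around a point of the torus -/

/-- The representative of `x - z` modulo `ℤ^d` in the cube `[-1/2, 1/2]^d`. -/
def wrp {d : ℕ} (z x : Fin d → ℝ) : Fin d → ℝ := fun j => x j - z j - (round (x j - z j) : ℝ)

lemma add_wrp {d : ℕ} (z x : Fin d → ℝ) :
    ∃ v : Fin d → ℤ, z + wrp z x = fun j => x j + (v j : ℝ) :=
  ⟨fun j => -round (x j - z j), by funext j; simp [wrp]; ring⟩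

lemma per_wrp {d : ℕ} {g : (Fin d → ℝ) → ℝ} (hg : PerT d g) (z x : Fin d → ℝ) :
    g (z + wrp z x) = g x := by
  obtain ⟨v, hv⟩ := add_wrp z x
  rw [hv, hg]

lemma wrp_add {d : ℕ} {z x y s : Fin d → ℝ} {v : Fin d → ℤ}
    (hy : ∀ j, y j = x j + s j + (v j : ℝ)) (hx : ‖wrp z x‖ ≤ 1 / 4) (hs : ∀ j, |s j| < 1 / 4) :
    wrp z y = wrp z x + s := by
  funext j
  have h1 : |wrp z x j| ≤ 1 / 4 := (norm_le_pi_norm (wrp z x) j).trans hx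
  have h2 := hs j
  have h3 : y j - z j = (wrp z x j + s j) + ((round (x j - z j) + v j : ℤ) : ℝ) := by
    rw [hy j]; simp only [wrp]; push_cast; ring
  have h4 : round (wrp z x j + s j) = 0 := by
    rw [round_eq_zero_iff]
    rw [abs_le] at h1
    rw [abs_lt] at h2
    constructor <;> linarith
  change y j - z j - (round (y j - z j) : ℝ) = _
  rw [h3, round_add_intCast, h4]
  simp

lemma wrp_nb {d n : ℕ} (hn : 5 ≤ n) {z x : Fin d → ℝ} (hx : ‖wrp z x‖ ≤ 1 / 4)
    (p : Fin d × Bool) : wrp z (nb d n x p) = wrp z x + stp d n p := by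
  obtain ⟨v, hv⟩ := nb_eq_add (n := n) x p
  refine wrp_add hv hx fun j => (abs_stp_le p j).trans_lt ?_
  have hn' : (5 : ℝ) ≤ n := by exact_mod_cast hn
  rw [div_lt_div_iff₀ (by linarith) (by norm_num)]
  linarith

lemma exists_near {d n : ℕ} (hn : 0 < n) {z : Fin d → ℝ} (hz : ∀ j, z j ∈ Set.Ico (0 : ℝ) 1) :
    ∃ x ∈ XiT d n, ‖wrp z x‖ ≤ 1 / n := by
  have hn' : (0 : ℝ) < n := by exact_mod_cast hn
  have hx : ∀ j, |(⌊(n : ℝ) * z j⌋ : ℝ) / n - z j| ≤ 1 / n ∧ (⌊(n : ℝ) * z j⌋ : ℝ) / n ≤ z j := by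
    intro j
    have h1 := Int.floor_le ((n : ℝ) * z j)
    have h2 := Int.lt_floor_add_one ((n : ℝ) * z j)
    have h3 : (⌊(n : ℝ) * z j⌋ : ℝ) / n ≤ z j := by rw [div_le_iff₀ hn']; linarith
    refine ⟨?_, h3⟩
    rw [abs_sub_comm, abs_of_nonneg (by linarith), sub_le_iff_le_add, ← add_div, le_div_iff₀ hn']
    linarith
  refine ⟨fun j => (⌊(n : ℝ) * z j⌋ : ℝ) / n, (mem_XiT hn _).2 fun j => ⟨⟨_, rfl⟩, ?_, ?_⟩, ?_⟩
  · have : (0 : ℤ) ≤ ⌊(n : ℝ) * z j⌋ := Int.floor_nonneg.2 (mul_nonneg hn'.le (hz j).1)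
    have : (0 : ℝ) ≤ ⌊(n : ℝ) * z j⌋ := by exact_mod_cast this
    positivity
  · exact (hx j).2.trans_lt (hz j).2
  · refine (pi_norm_le_iff_of_nonneg (by positivity)).2 fun j => ?_
    refine le_trans ?_ (hx j).1
    have := round_le ((⌊(n : ℝ) * z j⌋ : ℝ) / n - z j) 0
    simpa [wrp] using this

/-! ### Energy of a truncated Gaussian -/

lemma card_XiT_le (d n : ℕ) : ((XiT d n).card : ℝ) ≤ (n : ℝ) ^ d := by
  have h := Finset.card_image_le (s := (Finset.univ : Finset (Fin d → Fin n)))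
    (f := fun k i => ((k i : ℕ) : ℝ) / (n : ℝ))
  have h2 : (XiT d n).card ≤ n ^ d := by
    refine le_trans h (le_of_eq ?_)
    simp
  exact_mod_cast h2

/-- The truncated square-root Gaussian `e^{-nS/2}` around `z`, cut off sharply at distance `r`. -/
def trial {d : ℕ} (n : ℕ) (z : Fin d → ℝ) (S : (Fin d → ℝ) → ℝ) (r : ℝ) (x : Fin d → ℝ) : ℝ :=
  if ‖wrp z x‖ ≤ r then Real.exp (-((n : ℝ) / 2) * S (wrp z x)) else 0

lemma trial_nonneg {d : ℕ} (n : ℕ) (z : Fin d → ℝ) (S : (Fin d → ℝ) → ℝ) (r : ℝ)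
    (x : Fin d → ℝ) : 0 ≤ trial n z S r x := by
  rw [trial]; split_ifs <;> positivity

/-- Ground-state representation of the energy of the normalized square of `trial`: a bulk term
averaging the bracket of `bracket_le`, and a boundary term from the edges leaving the support. -/
lemma energy_le {d n : ℕ} (hn : 5 ≤ n) {F : (Fin d → ℝ) → ℝ} (hF : PerT d F) {z : Fin d → ℝ}
    {S : (Fin d → ℝ) → ℝ} {r b c : ℝ} (hr4 : r ≤ 1 / 4) (hS0 : ∀ w, 0 ≤ S w)
    (hSc : ∀ w, r < ‖w‖ → c ≤ S w)
    (hB : ∀ w : Fin d → ℝ, ‖w‖ ≤ r →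
      n * ∑ i, ((Real.exp (-(n * (F (z + w + Pi.single i (1 / (n : ℝ))) - F (z + w))) / 2) +
            Real.exp (-(n * (F (z + w + Pi.single i (-1 / (n : ℝ))) - F (z + w))) / 2)) -
          (Real.exp (-(n * (S (w + Pi.single i (1 / (n : ℝ))) - S w)) / 2) +
            Real.exp (-(n * (S (w + Pi.single i (-1 / (n : ℝ))) - S w)) / 2))) ≤ b)
    {N : ℝ} (hN0 : 0 < N) (hN : ∑ x ∈ XiT d n, trial n z S r x ^ 2 = N) :
    n * IT d F n (fun x => trial n z S r x ^ 2 / N) ≤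
      b + n * ((n : ℝ) ^ d * (2 * d * (Real.exp (-((n : ℝ) / 2) * c) / N))) := by
  have hn0 : (0 : ℝ) ≤ n := by positivity
  set u := trial n z S r with hu
  have hu0 : ∀ x, 0 ≤ u x := trial_nonneg n z S r
  have hu1 : ∀ x, u x ≤ 1 := fun x => by
    rw [hu, trial]
    split_ifs
    · rw [Real.exp_le_one_iff]
      have := mul_nonneg hn0 (hS0 (wrp z x))
      linarith
    · exact zero_le_one
  set δ := Real.exp (-((n : ℝ) / 2) * c) with hδ
  have hsqrt : ∀ x, √(u x ^ 2 / N) = u x / √N := fun x => by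
    rw [Real.sqrt_div (sq_nonneg _), Real.sqrt_sq (hu0 x)]
  have hNN : √N * √N = N := Real.mul_self_sqrt hN0.le
  rw [IT_eq (by omega) F _ fun x _ => by positivity]
  -- the sum over neighbours of a fixed lattice point
  have hpt : ∀ x, n * ∑ p, (u x ^ 2 / N * Real.exp (-((n : ℝ) / 2) * (F (nb d n x p) - F x)) -
      √(u x ^ 2 / N) * √(u (nb d n x p) ^ 2 / N)) ≤
      u x ^ 2 / N * b + n * (2 * d * (δ / N)) := by
    intro x
    by_cases hx : ‖wrp z x‖ ≤ r
    · set w := wrp z x with hw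
      have hux : u x = Real.exp (-((n : ℝ) / 2) * S w) := by rw [hu, trial, if_pos hx]
      have hterm : ∀ p, u x ^ 2 / N * Real.exp (-((n : ℝ) / 2) * (F (nb d n x p) - F x)) -
          √(u x ^ 2 / N) * √(u (nb d n x p) ^ 2 / N) ≤
          u x ^ 2 / N * (Real.exp (-(n * (F (z + w + stp d n p) - F (z + w))) / 2) -
            Real.exp (-(n * (S (w + stp d n p) - S w)) / 2)) + δ / N := by
        intro p
        have hwp : wrp z (nb d n x p) = w + stp d n p := wrp_nb hn (hx.trans hr4) p
        have hF1 : F (nb d n x p) = F (z + w + stp d n p) := by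
          rw [← per_wrp hF z (nb d n x p), hwp, add_assoc]
        have hF2 : F x = F (z + w) := (per_wrp hF z x).symm
        have huy : Real.exp (-((n : ℝ) / 2) * S (w + stp d n p)) - δ ≤ u (nb d n x p) := by
          rw [hu, trial, hwp]
          split_ifs with h
          · have := Real.exp_pos (-((n : ℝ) / 2) * c)
            linarith
          · rw [sub_nonpos, hδ, Real.exp_le_exp]
            have := mul_le_mul_of_nonneg_left (hSc _ (not_le.1 h)) hn0
            linarith
        have hprod : u x ^ 2 * Real.exp (-(n * (S (w + stp d n p) - S w)) / 2) =
            u x * Real.exp (-((n : ℝ) / 2) * S (w + stp d n p)) := by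
          rw [hux, ← Real.exp_nat_mul, ← Real.exp_add, ← Real.exp_add]
          congr 1
          push_cast
          ring
        have hE : Real.exp (-((n : ℝ) / 2) * (F (nb d n x p) - F x)) =
            Real.exp (-(n * (F (z + w + stp d n p) - F (z + w))) / 2) := by
          rw [hF1, hF2]; congr 1; ring
        have hss : √(u x ^ 2 / N) * √(u (nb d n x p) ^ 2 / N) = u x * u (nb d n x p) / N := by
          rw [hsqrt, hsqrt, div_mul_div_comm, hNN]
        rw [hss, hE]
        have h1 : u x * (Real.exp (-((n : ℝ) / 2) * S (w + stp d n p)) - δ) ≤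
            u x * u (nb d n x p) := mul_le_mul_of_nonneg_left huy (hu0 x)
        have h2 : u x * δ ≤ 1 * δ := mul_le_mul_of_nonneg_right (hu1 x) (Real.exp_pos _).le
        have h3 : u x ^ 2 * Real.exp (-(n * (S (w + stp d n p) - S w)) / 2) - δ ≤
            u x * u (nb d n x p) := by rw [hprod]; linarith
        have h4 := div_le_div_of_nonneg_right h3 hN0.le
        have h5 : u x ^ 2 / N * (Real.exp (-(n * (F (z + w + stp d n p) - F (z + w))) / 2) -
            Real.exp (-(n * (S (w + stp d n p) - S w)) / 2)) + δ / N =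
          u x ^ 2 / N * Real.exp (-(n * (F (z + w + stp d n p) - F (z + w))) / 2) -
            (u x ^ 2 * Real.exp (-(n * (S (w + stp d n p) - S w)) / 2) - δ) / N := by ring
        rw [h5]
        linarith
      have hs := Finset.sum_le_sum fun p (_ : p ∈ Finset.univ) => hterm p
      rw [Finset.sum_add_distrib, ← Finset.mul_sum, Finset.sum_const, Finset.card_univ,
        Fintype.card_prod, Fintype.card_fin, Fintype.card_bool] at hs
      simp only [Fintype.sum_prod_type, Fintype.sum_bool] at hs ⊢
      have hb := mul_le_mul_of_nonneg_left (hB w hx) (show 0 ≤ u x ^ 2 / N by positivity)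
      have hs' := mul_le_mul_of_nonneg_left hs hn0
      refine hs'.trans ?_
      rw [mul_add, nsmul_eq_mul]
      push_cast
      refine add_le_add (le_of_eq_of_le ?_ hb) (le_of_eq (by ring))
      rw [mul_left_comm]
      congr 2
      refine Finset.sum_congr rfl fun i _ => ?_
      simp only [stp, if_true, Bool.false_eq_true, if_false]
      ring
    · have hux : u x = 0 := by rw [hu, trial, if_neg hx]
      simp only [hux]
      simp
      positivity
  rw [Finset.mul_sum]
  refine (Finset.sum_le_sum fun x _ => hpt x).trans ?_
  rw [Finset.sum_add_distrib, ← Finset.sum_mul, ← Finset.sum_div, hN, div_self hN0.ne', one_mul,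
    Finset.sum_const, nsmul_eq_mul]
  have := card_XiT_le d n
  have h0 : 0 ≤ 2 * (d : ℝ) * (δ / N) := by positivity
  rw [mul_left_comm]
  gcongr

/-! ### Recovery sequence at a critical point -/

/-- The cutoff radius `n^{-2/5}`, between the Gaussian scale `n^{-1/2}` and the scale
`n^{-1/3}` at which the cubic terms of `F` are felt. -/
def rad (n : ℕ) : ℝ := (n : ℝ) ^ (-(2 / 5) : ℝ)

lemma rad_facts {n : ℕ} (hn : 0 < n) : 0 ≤ rad n ∧ rad n ≤ 1 ∧ 1 / (n : ℝ) ≤ rad n ^ 2 ∧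
    (n : ℝ) * rad n ^ 2 = (n : ℝ) ^ (1 / 5 : ℝ) ∧
    (n : ℝ) * rad n ^ 3 = (n : ℝ) ^ (-(1 / 5) : ℝ) := by
  have h1 : (1 : ℝ) ≤ n := by exact_mod_cast hn
  have h0 : (0 : ℝ) < n := by linarith
  have hp : ∀ k : ℕ, rad n ^ k = (n : ℝ) ^ (-(2 / 5) * k : ℝ) := fun k => by
    rw [rad, ← Real.rpow_natCast, ← Real.rpow_mul h0.le]
  refine ⟨by rw [rad]; positivity, Real.rpow_le_one_of_one_le_of_nonpos h1 (by norm_num), ?_, ?_, ?_⟩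
  · rw [hp, one_div, ← Real.rpow_neg_one]
    exact Real.rpow_le_rpow_of_exponent_le h1 (by norm_num)
  · rw [hp]
    nth_rewrite 1 [← Real.rpow_one (n : ℝ)]
    rw [← Real.rpow_add h0]
    norm_num
  · rw [hp]
    nth_rewrite 1 [← Real.rpow_one (n : ℝ)]
    rw [← Real.rpow_add h0]
    norm_num

lemma rad_tendsto : Tendsto rad atTop (nhds 0) :=
  (tendsto_rpow_neg_atTop (by norm_num : (0 : ℝ) < 2 / 5)).comp tendsto_natCast_atTop_atTop

/-- The boundary error is negligible: at the cutoff radius the Gaussian weight is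
`e^{-c n^{1/5}}`, which beats the volume factor `n^{d+1}`. -/
lemma boundary_tendsto (d : ℕ) {c : ℝ} (hc : 0 < c) :
    Tendsto (fun n : ℕ => (n : ℝ) * (n : ℝ) ^ d * Real.exp (-c * (n : ℝ) ^ (1 / 5 : ℝ)))
      atTop (nhds 0) := by
  have h1 : Tendsto (fun n : ℕ => (n : ℝ) ^ (1 / 5 : ℝ)) atTop atTop :=
    (tendsto_rpow_atTop (by norm_num)).comp tendsto_natCast_atTop_atTop
  have h2 := (tendsto_rpow_mul_exp_neg_mul_atTop_nhds_zero (5 * (d + 1)) c hc).comp h1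
  refine h2.congr fun n => ?_
  simp only [Function.comp]
  congr 1
  rw [← Real.rpow_mul (by positivity), show (1 / 5 * (5 * ((d : ℝ) + 1))) = ((d + 1 : ℕ) : ℝ) by
    push_cast; ring, Real.rpow_natCast, pow_succ']

/-- Recovery sequence for the Dirac mass at a nondegenerate critical point `z`. The energy bound
is stated through an explicit convergent majorant `e n`, so that finitely many wells can be
added up. -/
lemma exists_well {d : ℕ} {F : (Fin d → ℝ) → ℝ} (hFper : PerT d F) (hF : ContDiff ℝ 2 F)
    {L : NNReal} (hL : LipschitzWith L (iteratedFDeriv ℝ 2 F)) {z : Fin d → ℝ}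
    (hzI : ∀ j, z j ∈ Set.Ico (0 : ℝ) 1) (hz : fderiv ℝ F z = 0)
    (hH : (HessT d F z).IsHermitian) (hne : ∀ i, hH.eigenvalues i ≠ 0) :
    ∃ ν : ℕ → (Fin d → ℝ) → ℝ, (∀ n x, 0 ≤ ν n x) ∧
      (∀ n, 0 < n → ∑ x ∈ XiT d n, ν n x = 1) ∧
      (∀ g : (Fin d → ℝ) → ℝ, Continuous g → PerT d g →
        Tendsto (fun n => ∑ x ∈ XiT d n, ν n x * g x) atTop (nhds (g z))) ∧
      ∃ e : ℕ → ℝ, Tendsto e atTop (nhds (∑ i, max (-hH.eigenvalues i) 0)) ∧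
        ∀ᶠ n : ℕ in atTop, (n : ℝ) * IT d F n (ν n) ≤ e n := by
  obtain ⟨A, hA, htr, hAH, c, hc, hcoer⟩ := exists_absMat hH hne
  obtain ⟨M, hM0, hM⟩ : ∃ M : ℝ, 0 ≤ M ∧ ∀ i v, |(A.mulVec v) i| ≤ M * ‖v‖ := by
    refine ⟨∑ i, ∑ j, |A i j|, by positivity, fun i v => ?_⟩
    rw [Matrix.mulVec, dotProduct]
    refine (Finset.abs_sum_le_sum_abs _ _).trans ?_
    have h1 : ∑ j, |A i j * v j| ≤ ∑ j, |A i j| * ‖v‖ := by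
      refine Finset.sum_le_sum fun j _ => ?_
      rw [abs_mul]
      gcongr
      exact norm_le_pi_norm v j
    rw [← Finset.sum_mul] at h1
    refine h1.trans (mul_le_mul_of_nonneg_right ?_ (norm_nonneg v))
    exact Finset.single_le_sum (f := fun i => ∑ j, |A i j|)
      (fun _ _ => by positivity) (Finset.mem_univ i)
  set S : (Fin d → ℝ) → ℝ := fun w => (w ⬝ᵥ A.mulVec w) / 2 with hSdef
  have hS : ∀ w, S w = (w ⬝ᵥ A.mulVec w) / 2 := fun _ => rfl
  have hnd : ∀ w : Fin d → ℝ, ‖w‖ ^ 2 ≤ w ⬝ᵥ w := by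
    intro w
    have h0 : 0 ≤ w ⬝ᵥ w := Finset.sum_nonneg fun i _ => mul_self_nonneg _
    rw [← Real.le_sqrt (norm_nonneg _) h0]
    refine (pi_norm_le_iff_of_nonneg (Real.sqrt_nonneg _)).2 fun i => ?_
    rw [Real.norm_eq_abs]
    refine Real.abs_le_sqrt ?_
    rw [sq]
    exact Finset.single_le_sum (f := fun i => w i * w i)
      (fun _ _ => mul_self_nonneg _) (Finset.mem_univ i)
  have hSlow : ∀ w, c / 2 * ‖w‖ ^ 2 ≤ S w := by
    intro w
    have := hcoer w
    have := mul_le_mul_of_nonneg_left (hnd w) hc.le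
    rw [hS]
    linarith
  have hSup : ∀ w, S w ≤ d * M * ‖w‖ ^ 2 := by
    intro w
    have h1 : w ⬝ᵥ A.mulVec w ≤ ∑ _i : Fin d, ‖w‖ * (M * ‖w‖) := by
      refine Finset.sum_le_sum fun i _ => ?_
      refine (le_abs_self _).trans ?_
      rw [abs_mul]
      gcongr
      · exact norm_le_pi_norm w i
      · exact hM i w
    rw [Finset.sum_const, Finset.card_univ, Fintype.card_fin, nsmul_eq_mul] at h1
    have h2 : 0 ≤ (d : ℝ) * (‖w‖ * (M * ‖w‖)) := by positivity
    rw [hS]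
    nlinarith
  have hS0 : ∀ w, 0 ≤ S w := fun w => le_trans (by positivity) (hSlow w)
  obtain ⟨K, r₀, hr₀, hK⟩ := bracket_le hF hL hz hH hA hAH hM0 hM hS
  set u : ℕ → (Fin d → ℝ) → ℝ := fun n => trial n z S (rad n) with hu
  set N : ℕ → ℝ := fun n => ∑ x ∈ XiT d n, u n x ^ 2 with hN
  -- a lattice point at distance `≤ 1/n` from `z` bounds the normalization from below
  have hNlow : ∀ n, 0 < n → Real.exp (-(d * M)) ≤ N n := by
    intro n hn
    obtain ⟨x, hx, hwx⟩ := exists_near hn hzI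
    have h1 : (1 : ℝ) ≤ n := by exact_mod_cast hn
    obtain ⟨k0, k1, k2, -, -⟩ := rad_facts hn
    refine le_trans ?_ (Finset.single_le_sum (f := fun x => u n x ^ 2)
      (fun _ _ => sq_nonneg _) hx)
    have hle : ‖wrp z x‖ ≤ rad n := hwx.trans (k2.trans (by nlinarith))
    simp only [hu, trial]
    rw [if_pos hle, ← Real.exp_nat_mul, Real.exp_le_exp]
    have h2 : ‖wrp z x‖ ^ 2 ≤ (1 / (n : ℝ)) ^ 2 := by gcongr
    have h3 : (n : ℝ) * S (wrp z x) ≤ n * (d * M * (1 / (n : ℝ)) ^ 2) := by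
      gcongr
      exact (hSup _).trans (by gcongr)
    have h4 : n * (d * M * (1 / (n : ℝ)) ^ 2) = d * M * (1 / n) := by field_simp
    have h5 : d * M * (1 / (n : ℝ)) ≤ d * M * 1 := by
      gcongr
      rw [div_le_one (by linarith)]; exact h1
    push_cast
    linarith
  have hNpos : ∀ n, 0 < n → 0 < N n := fun n hn => (Real.exp_pos _).trans_le (hNlow n hn)
  have hsum : ∀ n, 0 < n → ∑ x ∈ XiT d n, u n x ^ 2 / N n = 1 := fun n hn => by
    rw [← Finset.sum_div, div_self (hNpos n hn).ne']
  have hN0 : ∀ n, 0 ≤ N n := fun n => Finset.sum_nonneg fun _ _ => sq_nonneg _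
  refine ⟨fun n x => u n x ^ 2 / N n, fun n x => div_nonneg (sq_nonneg _) (hN0 n), hsum, ?_, ?_⟩
  · intro g hg hgper
    rw [Metric.tendsto_atTop']
    intro ε hε
    obtain ⟨η, hη, hgη⟩ := Metric.continuousAt_iff.1 hg.continuousAt (ε / 2) (by positivity)
    obtain ⟨n₀, hn₀⟩ := (eventually_atTop.1 (rad_tendsto.eventually (gt_mem_nhds hη)))
    refine ⟨n₀, fun n hn => ?_⟩
    have hn' : 0 < n := by omega
    have h1 : ∑ x ∈ XiT d n, u n x ^ 2 / N n * g x - g z =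
        ∑ x ∈ XiT d n, u n x ^ 2 / N n * (g x - g z) := by
      simp only [mul_sub, Finset.sum_sub_distrib]
      rw [← Finset.sum_mul, hsum n hn', one_mul]
    rw [Real.dist_eq, h1]
    refine lt_of_le_of_lt (Finset.abs_sum_le_sum_abs _ _) ?_
    have h2 : ∑ x ∈ XiT d n, |u n x ^ 2 / N n * (g x - g z)| ≤
        ∑ x ∈ XiT d n, u n x ^ 2 / N n * (ε / 2) := by
      refine Finset.sum_le_sum fun x _ => ?_
      have h0 : 0 ≤ u n x ^ 2 / N n := div_nonneg (sq_nonneg _) (hN0 n)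
      rw [abs_mul, abs_of_nonneg h0]
      by_cases hx : ‖wrp z x‖ ≤ rad n
      · gcongr
        rw [← per_wrp hgper z x, ← Real.dist_eq]
        refine (hgη ?_).le
        rw [dist_eq_norm, add_sub_cancel_left]
        exact hx.trans_lt (hn₀ n hn.le)
      · simp [hu, trial, if_neg hx]
    rw [← Finset.sum_mul, hsum n hn', one_mul] at h2
    linarith
  · refine ⟨fun n => (A.trace - (HessT d F z).trace) / 2 +
      K * (rad n + (n : ℝ) ^ (-(1 / 5) : ℝ)) + (2 * d * Real.exp (d * M)) *
        ((n : ℝ) * (n : ℝ) ^ d * Real.exp (-(c / 4) * (n : ℝ) ^ (1 / 5 : ℝ))), ?_, ?_⟩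
    · have h1 : Tendsto (fun n : ℕ => (n : ℝ) ^ (-(1 / 5) : ℝ)) atTop (nhds 0) :=
        (tendsto_rpow_neg_atTop (by norm_num : (0 : ℝ) < 1 / 5)).comp tendsto_natCast_atTop_atTop
      have h2 := ((tendsto_const_nhds (x := (A.trace - (HessT d F z).trace) / 2)).add
        ((rad_tendsto.add h1).const_mul K)).add
        ((boundary_tendsto d (show 0 < c / 4 by positivity)).const_mul (2 * d * Real.exp (d * M)))
      rw [htr] at h2 ⊢
      simpa using h2
    · filter_upwards [eventually_ge_atTop 5, rad_tendsto.eventually (ge_mem_nhds hr₀),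
        rad_tendsto.eventually (ge_mem_nhds (show (0 : ℝ) < 1 / 4 by norm_num))] with n hn h5 h6
      have hn' : 0 < n := by omega
      have hn0 : (0 : ℝ) < n := by exact_mod_cast hn'
      obtain ⟨k0, k1, k2, k3, k4⟩ := rad_facts hn'
      have := energy_le hn hFper (z := z) (S := S) (r := rad n) (c := c / 2 * rad n ^ 2) h6 hS0
        (fun w hw => le_trans (by gcongr) (hSlow w))
        (fun w hw => hK n (rad n) w hn0 k0 k1 h5 k2 hw) (hNpos n hn') rfl
      rw [k4] at this
      refine this.trans (add_le_add le_rfl ?_)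
      have e1 : -((n : ℝ) / 2) * (c / 2 * rad n ^ 2) = -(c / 4) * (n : ℝ) ^ (1 / 5 : ℝ) := by
        rw [← k3]; ring
      rw [e1]
      have e2 : 1 / N n ≤ Real.exp (d * M) := by
        rw [div_le_iff₀ (hNpos n hn')]
        have := mul_le_mul_of_nonneg_left (hNlow n hn') (Real.exp_pos (d * M)).le
        rwa [← Real.exp_add, add_neg_cancel, Real.exp_zero] at this
      have hX := Real.exp_pos (-(c / 4) * (n : ℝ) ^ (1 / 5 : ℝ))
      generalize Real.exp (-(c / 4) * (n : ℝ) ^ (1 / 5 : ℝ)) = X at hX ⊢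
      have e3 := mul_le_mul_of_nonneg_left e2
        (show 0 ≤ (n : ℝ) * (n : ℝ) ^ d * (2 * d) * X by positivity)
      calc _ = (n : ℝ) * (n : ℝ) ^ d * (2 * d) * X * (1 / N n) := by ring
        _ ≤ _ := e3
        _ = _ := by ring

/-! ### Weak approximation by lattice measures -/

/-- The lattice point at the lower corner of the cell of side `1/n` containing `y`. -/
def corner (d n : ℕ) (y : Fin d → ℝ) : Fin d → ℝ := fun j => (⌊(n : ℝ) * y j⌋ : ℝ) / n

lemma measurable_corner (d n : ℕ) : Measurable (corner d n) := by
  refine measurable_pi_lambda _ fun j => ?_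
  have h : Measurable fun y : Fin d → ℝ => ⌊(n : ℝ) * y j⌋ :=
    Int.measurable_floor.comp ((measurable_pi_apply j).const_mul _)
  exact (measurable_from_top (f := fun k : ℤ => (k : ℝ) / n)).comp h

lemma corner_mem {d n : ℕ} (hn : 0 < n) {y : Fin d → ℝ} (hy : ∀ j, y j ∈ Set.Ico (0 : ℝ) 1) :
    corner d n y ∈ XiT d n := by
  have hn0 : (0 : ℝ) < n := by exact_mod_cast hn
  have h0 : ∀ j, 0 ≤ ⌊(n : ℝ) * y j⌋ := fun j =>
    Int.floor_nonneg.2 (mul_nonneg hn0.le (hy j).1)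
  have h1 : ∀ j, ⌊(n : ℝ) * y j⌋ < n := fun j => by
    rw [Int.floor_lt]
    push_cast
    nlinarith [(hy j).2]
  have h2 : ∀ j, (⌊(n : ℝ) * y j⌋).toNat < n := fun j => by
    have := h0 j; have := h1 j; omega
  refine Finset.mem_image.2 ⟨fun j => ⟨_, h2 j⟩, Finset.mem_univ _, ?_⟩
  funext j
  simp only [corner]
  congr 1
  have := Int.toNat_of_nonneg (h0 j)
  exact_mod_cast this

lemma corner_tendsto {d : ℕ} (y : Fin d → ℝ) :
    Tendsto (fun n => corner d n y) atTop (nhds y) := by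
  refine tendsto_pi_nhds.2 fun j => ?_
  have h1 : Tendsto (fun n : ℕ => y j - 1 / (n : ℝ)) atTop (nhds (y j)) := by
    simpa using (tendsto_const_nhds (x := y j)).sub (tendsto_one_div_atTop_nhds_zero_nat (𝕜 := ℝ))
  refine tendsto_of_tendsto_of_tendsto_of_le_of_le' h1 tendsto_const_nhds ?_ ?_
  · filter_upwards [eventually_gt_atTop 0] with n hn
    have hn0 : (0 : ℝ) < n := by exact_mod_cast hn
    rw [corner, le_div_iff₀ hn0, sub_mul, one_div, inv_mul_cancel₀ hn0.ne']
    linarith [Int.sub_one_lt_floor ((n : ℝ) * y j)]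
  · filter_upwards [eventually_gt_atTop 0] with n hn
    have hn0 : (0 : ℝ) < n := by exact_mod_cast hn
    rw [corner, div_le_iff₀ hn0]
    linarith [Int.floor_le ((n : ℝ) * y j)]

lemma per_bounded {d : ℕ} {g : (Fin d → ℝ) → ℝ} (hg : Continuous g) (hper : PerT d g) :
    ∃ C, ∀ x, ‖g x‖ ≤ C := by
  have hc : IsCompact (Set.univ.pi fun _ : Fin d => Set.Icc (0 : ℝ) 1) :=
    isCompact_univ_pi fun _ => isCompact_Icc
  obtain ⟨C, hC⟩ := hc.exists_bound_of_continuousOn hg.continuousOn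
  refine ⟨C, fun x => ?_⟩
  have h := hper x (fun i => -⌊x i⌋)
  rw [← h]
  refine hC _ fun i _ => ?_
  push_cast
  exact ⟨by linarith [Int.floor_le (x i)], by linarith [Int.lt_floor_add_one (x i)]⟩

/-- Weak approximation of `μ` by lattice measures, with no control on the energy. -/
lemma exists_weak {d : ℕ} (μ : Measure (Fin d → ℝ)) [IsProbabilityMeasure μ]
    (hμ : ∀ᵐ y ∂μ, ∀ j, y j ∈ Set.Ico (0 : ℝ) 1) :
    ∃ ν : ℕ → (Fin d → ℝ) → ℝ, (∀ n x, 0 ≤ ν n x) ∧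
      (∀ n, 0 < n → ∑ x ∈ XiT d n, ν n x = 1) ∧
      (∀ g : (Fin d → ℝ) → ℝ, Continuous g → PerT d g →
        Tendsto (fun n => ∑ x ∈ XiT d n, ν n x * g x) atTop (nhds (∫ x, g x ∂μ))) := by
  have hkey : ∀ (g : (Fin d → ℝ) → ℝ), Continuous g → ∀ n, 0 < n →
      ∑ x ∈ XiT d n, (μ.map (corner d n)).real {x} * g x = ∫ y, g (corner d n y) ∂μ := by
    intro g hg n hn
    have hm := measurable_corner d n
    have hfin : IsProbabilityMeasure (μ.map (corner d n)) :=
      Measure.isProbabilityMeasure_map hm.aemeasurable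
    rw [← integral_map hm.aemeasurable hg.aestronglyMeasurable]
    have hae : ∀ᵐ x ∂(μ.map (corner d n)), x ∈ ((XiT d n : Finset _) : Set (Fin d → ℝ)) := by
      refine (ae_map_iff hm.aemeasurable (XiT d n).measurableSet).2 ?_
      filter_upwards [hμ] with y hy using corner_mem hn hy
    rw [← Measure.restrict_eq_self_of_ae_mem hae, setIntegral_finset,
      Measure.restrict_eq_self_of_ae_mem hae]
    · simp
    · exact IntegrableOn.finset
  refine ⟨fun n x => (μ.map (corner d n)).real {x}, fun _ _ => measureReal_nonneg, ?_, ?_⟩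
  · intro n hn
    simpa using hkey (fun _ => 1) continuous_const n hn
  · intro g hg hper
    obtain ⟨C, hC⟩ := per_bounded hg hper
    have : Tendsto (fun n => ∫ y, g (corner d n y) ∂μ) atTop (nhds (∫ y, g y ∂μ)) := by
      refine tendsto_integral_of_dominated_convergence (fun _ => C) (fun n => ?_)
        (integrable_const C) (fun n => ae_of_all _ fun y => hC _) (ae_of_all _ fun y => ?_)
      · exact (hg.measurable.comp (measurable_corner d n)).aestronglyMeasurable
      · exact (hg.tendsto y).comp (corner_tendsto y)
    refine this.congr' ?_
    filter_upwards [eventually_gt_atTop 0] with n hn using (hkey g hg n hn).symm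

/-! ### The upper bound for general measures -/

/-- Γ-limsup for `n·ℐ_n`: for every probability measure `μ` on the torus
there is a sequence `μ_n → μ` weakly with `limsup n·ℐ_n(μ_n) ≤ J⁰(μ) = ∫ ζ dμ`, where
`ζ(x) = Σᵢ max{-ξᵢ(x),0}` at critical points `x` and `ζ = +∞` elsewhere. -/
theorem stmt14 (d : ℕ) (F : (Fin d → ℝ) → ℝ)
    (hFper : PerT d F)
    (hFC2 : ContDiff ℝ 2 F)
    (hFLip : ∃ L : NNReal, LipschitzWith L (iteratedFDeriv ℝ 2 F))
    (hFfin : {x : Fin d → ℝ |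
      (∀ i, x i ∈ Set.Ico (0 : ℝ) 1) ∧ fderiv ℝ F x = 0}.Finite)
    (ξ : (Fin d → ℝ) → Fin d → ℝ)
    (hξ : ∀ z : Fin d → ℝ, fderiv ℝ F z = 0 →
      ∃ (hH : (HessT d F z).IsHermitian) (σ : Equiv.Perm (Fin d)),
        ∀ i, ξ z i = hH.eigenvalues (σ i))
    (hnd : ∀ z : Fin d → ℝ, fderiv ℝ F z = 0 → ∀ i, ξ z i ≠ 0)
    (μ : Measure (Fin d → ℝ)) (hμ : IsProbabilityMeasure μ)
    (hμsupp : μ (Set.univ.pi fun _ => Set.Ico (0 : ℝ) 1) = 1) :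
    ∃ μn : ℕ → (Fin d → ℝ) → ℝ,
      (∀ n, 0 < n →
        (∀ x ∈ XiT d n, 0 ≤ μn n x) ∧ ∑ x ∈ XiT d n, μn n x = 1) ∧
      (∀ g : (Fin d → ℝ) → ℝ, Continuous g → PerT d g →
        Tendsto (fun n => ∑ x ∈ XiT d n, μn n x * g x) atTop
          (nhds (∫ x, g x ∂μ))) ∧
      limsup (fun n : ℕ => ENNReal.ofReal ((n : ℝ) * IT d F n (μn n))) atTop ≤
        ∫⁻ x, (if fderiv ℝ F x = 0 then
          ENNReal.ofReal (∑ i : Fin d, max (-(ξ x i)) 0) else ⊤) ∂μ := by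
  have hcube : ∀ᵐ y ∂μ, ∀ j, y j ∈ Set.Ico (0 : ℝ) 1 := by
    have hms : MeasurableSet (Set.univ.pi fun _ : Fin d => Set.Ico (0 : ℝ) 1) :=
      MeasurableSet.univ_pi fun _ => measurableSet_Ico
    have := (prob_compl_eq_zero_iff hms).2 hμsupp
    filter_upwards [mem_ae_iff.2 this] with y hy j using hy j (Set.mem_univ j)
  by_cases htop : (∫⁻ x, (if fderiv ℝ F x = 0 then
      ENNReal.ofReal (∑ i : Fin d, max (-(ξ x i)) 0) else ⊤) ∂μ) = ⊤
  · obtain ⟨ν, h1, h2, h3⟩ := exists_weak μ hcube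
    exact ⟨ν, fun n hn => ⟨fun x _ => h1 n x, h2 n hn⟩, h3, by rw [htop]; exact le_top⟩
  obtain ⟨L, hL⟩ := hFLip
  have hclosed : MeasurableSet {x : Fin d → ℝ | fderiv ℝ F x = 0} :=
    (isClosed_eq (hFC2.continuous_fderiv (by norm_num)) continuous_const).measurableSet
  set K : Finset (Fin d → ℝ) := hFfin.toFinset with hK
  have hmemK : ∀ z, z ∈ K ↔ (∀ i, z i ∈ Set.Ico (0 : ℝ) 1) ∧ fderiv ℝ F z = 0 := fun z => by
    simp [hK]
  -- finiteness of the right-hand side forces `μ` to live on the critical points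
  have hcrit : ∀ᵐ y ∂μ, fderiv ℝ F y = 0 := by
    by_contra hcon
    refine htop (top_unique ?_)
    have hpos : μ {x : Fin d → ℝ | fderiv ℝ F x = 0}ᶜ ≠ 0 := hcon
    calc (⊤ : ℝ≥0∞) = ⊤ * μ {x : Fin d → ℝ | fderiv ℝ F x = 0}ᶜ := (ENNReal.top_mul hpos).symm
      _ = ∫⁻ _ in {x : Fin d → ℝ | fderiv ℝ F x = 0}ᶜ, ⊤ ∂μ := (setLIntegral_const _ _).symm
      _ = ∫⁻ x in {x : Fin d → ℝ | fderiv ℝ F x = 0}ᶜ, (if fderiv ℝ F x = 0 then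
          ENNReal.ofReal (∑ i : Fin d, max (-(ξ x i)) 0) else ⊤) ∂μ := by
        refine setLIntegral_congr_fun hclosed.compl fun x hx => ?_
        exact (if_neg hx).symm
      _ ≤ _ := setLIntegral_le_lintegral _ _
  have hae : ∀ᵐ x ∂μ, x ∈ (K : Set (Fin d → ℝ)) := by
    filter_upwards [hcube, hcrit] with x h1 h2 using (hmemK x).2 ⟨h1, h2⟩
  have hres : μ.restrict (K : Set (Fin d → ℝ)) = μ := Measure.restrict_eq_self_of_ae_mem hae
  have hμK : ∀ g : (Fin d → ℝ) → ℝ, ∫ x, g x ∂μ = ∑ z ∈ K, μ.real {z} * g z := by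
    intro g
    conv_lhs => rw [← hres]
    rw [setIntegral_finset]
    · simp
    · exact IntegrableOn.finset
  have hwell : ∀ z, ∃ ν : ℕ → (Fin d → ℝ) → ℝ, ∃ e : ℕ → ℝ, z ∈ K →
      (∀ n x, 0 ≤ ν n x) ∧ (∀ n, 0 < n → ∑ x ∈ XiT d n, ν n x = 1) ∧
      (∀ g : (Fin d → ℝ) → ℝ, Continuous g → PerT d g →
        Tendsto (fun n => ∑ x ∈ XiT d n, ν n x * g x) atTop (nhds (g z))) ∧
      Tendsto e atTop (nhds (∑ i, max (-(ξ z i)) 0)) ∧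
        ∀ᶠ n : ℕ in atTop, (n : ℝ) * IT d F n (ν n) ≤ e n := by
    intro z
    by_cases hz : z ∈ K
    · obtain ⟨hz1, hz2⟩ := (hmemK z).1 hz
      obtain ⟨hH, σ, hσ⟩ := hξ z hz2
      have hne : ∀ i, hH.eigenvalues i ≠ 0 := fun i => by
        have := hnd z hz2 (σ.symm i)
        rwa [hσ, Equiv.apply_symm_apply] at this
      obtain ⟨ν, h1, h2, h3, e, h4, h5⟩ := exists_well hFper hFC2 hL hz1 hz2 hH hne
      refine ⟨ν, e, fun _ => ⟨h1, h2, h3, ?_, h5⟩⟩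
      have : ∑ i, max (-(ξ z i)) 0 = ∑ i, max (-hH.eigenvalues i) 0 := by
        simp only [hσ]
        exact Equiv.sum_comp σ fun i => max (-hH.eigenvalues i) 0
      rwa [this]
    · exact ⟨0, 0, fun h => absurd h hz⟩
  choose ν e hν using hwell
  refine ⟨fun n x => ∑ z ∈ K, μ.real {z} * ν z n x, ?_, ?_, ?_⟩
  · refine fun n hn => ⟨fun x _ => Finset.sum_nonneg fun z hz =>
      mul_nonneg measureReal_nonneg ((hν z hz).1 n x), ?_⟩
    rw [Finset.sum_comm]
    have h1 := hμK fun _ => 1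
    rw [integral_const, probReal_univ, one_smul] at h1
    rw [h1]
    refine Finset.sum_congr rfl fun z hz => ?_
    rw [← Finset.mul_sum, (hν z hz).2.1 n hn]
  · intro g hg hper
    rw [hμK]
    have := tendsto_finsetSum K fun z hz => ((hν z hz).2.2.1 g hg hper).const_mul (μ.real {z})
    refine this.congr fun n => ?_
    simp only [Finset.mul_sum, Finset.sum_mul]
    rw [Finset.sum_comm]
    simp only [mul_assoc]
  · have hlim : Tendsto (fun n => ENNReal.ofReal (∑ z ∈ K, μ.real {z} * e z n)) atTop
        (nhds (ENNReal.ofReal (∑ z ∈ K, μ.real {z} * ∑ i, max (-(ξ z i)) 0))) :=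
      (ENNReal.continuous_ofReal.tendsto _).comp
        (tendsto_finsetSum K fun z hz => ((hν z hz).2.2.2.1).const_mul _)
    have hle : ∀ᶠ n : ℕ in atTop, ENNReal.ofReal ((n : ℝ) *
        IT d F n (fun x => ∑ z ∈ K, μ.real {z} * ν z n x)) ≤
        ENNReal.ofReal (∑ z ∈ K, μ.real {z} * e z n) := by
      have hall : ∀ᶠ n : ℕ in atTop, ∀ z ∈ K, (n : ℝ) * IT d F n (ν z n) ≤ e z n :=
        (Filter.eventually_all_finset K).2 fun z hz => (hν z hz).2.2.2.2
      filter_upwards [hall, eventually_ge_atTop 3] with n h1 hn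
      refine ENNReal.ofReal_le_ofReal ?_
      have h2 := IT_convex hn F K (fun z => μ.real {z}) (fun _ _ => measureReal_nonneg)
        (fun z => ν z n) fun z hz x _ => (hν z hz).1 n x
      refine (mul_le_mul_of_nonneg_left h2 (Nat.cast_nonneg n)).trans ?_
      rw [Finset.mul_sum]
      refine Finset.sum_le_sum fun z hz => ?_
      rw [mul_left_comm]
      exact mul_le_mul_of_nonneg_left (h1 z hz) measureReal_nonneg
    refine (limsup_le_limsup hle).trans ?_
    rw [hlim.limsup_eq]
    conv_rhs => rw [← hres]
    rw [lintegral_finset, ENNReal.ofReal_sum_of_nonneg]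
    · refine Finset.sum_le_sum fun z hz => ?_
      rw [if_pos ((hmemK z).1 hz).2, ENNReal.ofReal_mul measureReal_nonneg, mul_comm,
        ofReal_measureReal]
    · exact fun z _ => mul_nonneg measureReal_nonneg
        (Finset.sum_nonneg fun i _ => le_max_right _ _)

end
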